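/- There exists an absolute constant γ₀ > 0 such that for every constant ε ∈ (0,1) and every ρ > 0 there exists m₀ such that for all m ≥ m₀ and all r with 1 ≤ r < γ₀·m the following holds. Set K = ⌊(1-ε)·binom(m,≤r)⌋ and let Z = {z₁,…,z_K} be a uniformly random K-element subset of F₂^m. Then with probability at least 1 - ρ, the F₂-dimension of I_r(Z) equals binom(m,≤r) - K. -/

import Mathlib

/-- `binomLe m r = ∑_{i=0}^r C(m,i)`, written `binom(m, ≤ r)`. -/
def binomLe (m r : ℕ) : ℕ := ∑ i ∈ Finset.range (r + 1), Nat.choose m i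

/-- Index type for multilinear monomials of degree at most `r` in `m` variables:
subsets `S ⊆ {1,…,m}` with `|S| ≤ r`. -/
abbrev MonIdx (m r : ℕ) := {S : Finset (Fin m) // S.card ≤ r}

/-- `RM(m,r)` as the space of coefficient vectors of multilinear polynomials in `m`
variables of total degree at most `r` over `F₂`. -/
abbrev RMcode (m r : ℕ) := MonIdx m r → ZMod 2

/-- Evaluation of a polynomial (given by its coefficients) at the point `z`,
as a linear map: `c ↦ ∑_{|S| ≤ r} c_S ∏_{i ∈ S} z_i`. -/
def evalLin (m r : ℕ) (z : Fin m → ZMod 2) : RMcode m r →ₗ[ZMod 2] ZMod 2 :=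
  ∑ S : MonIdx m r, (∏ i ∈ S.1, z i) • LinearMap.proj S

/-- The degree-`r` vanishing space `I_r(Z)` of the set `Z ⊆ F₂^m`. -/
def vanishing (m r : ℕ) (Z : Set (Fin m → ZMod 2)) : Submodule (ZMod 2) (RMcode m r) :=
  ⨅ z ∈ Z, LinearMap.ker (evalLin m r z)

/-- The vector `z^{(r)}` of evaluations at `z` of all multilinear monomials of degree `≤ r`. -/
def monVec (m r : ℕ) (z : Fin m → ZMod 2) : MonIdx m r → ZMod 2 := fun S => ∏ i ∈ S.1, z i

/-- Fractional Hamming weight of the polynomial with coefficients `c`. -/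
noncomputable def wt (m r : ℕ) (c : RMcode m r) : ℝ :=
  ((Finset.univ.filter (fun z : Fin m → ZMod 2 => evalLin m r z c ≠ 0)).card : ℝ) / 2 ^ m

/-- The number of zeros in `F₂^m` of the polynomial with coefficients `c`,
i.e. `(1 - wt(P)) · 2^m`. -/
def numZeros (m r : ℕ) (c : RMcode m r) : ℕ :=
  (Finset.univ.filter (fun z : Fin m → ZMod 2 => evalLin m r z c = 0)).card

/-- The degree-`r` closure of `Z ⊆ F₂^m`. -/
def closureSet (m r : ℕ) (Z : Set (Fin m → ZMod 2)) : Set (Fin m → ZMod 2) :=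
  {u | ∀ c ∈ vanishing m r Z, evalLin m r u c = 0}

/-!
Write `N` for the dimension of `RM(m, r)`. Evaluation at `K` points imposes at most `K` linear
conditions, so `I_r(Z)` always has at least `2 ^ (N - K)` elements, and at least twice as many as
soon as its dimension exceeds `N - K`. By Markov's inequality it therefore suffices that the
expected size of `I_r(Z)` is at most `(1 + ρ) * 2 ^ (N - K)`, and this expectation is at most
`∑ f, (1 - w f) ^ K`, where `w f` is the fraction of points at which `f` is nonzero.

Since `K ≤ (1 - ε) * N`, the sum is controlled by counting the `f` of small weight. Within about
`1 / N` of weight `1 / 2`, and above it, the trivial count `2 ^ N` is enough. Three other counts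
cover the remaining weights.

* *Biased functions*, of weight `(1 - β) / 2`. Take majority votes of `f` over the cosets of the
  span of `t` random directions. If two such functions differ by a function constant on these
  cosets, then their votes are opposite wherever they differ, so by Chebyshev's inequality the
  difference has weight `O(1 / (β ^ 2 * 2 ^ t))`. Among the functions constant on the cosets is a
  copy of the space of functions of the same degree in `m - t` variables, so the number of biased
  functions is at most `2 ^ N / 2 ^ N'` times a number of very light functions, with `N'` the
  dimension of that space. As `r` is a small multiple of `m`, `N'` is a large part of `N`.
* *Light functions.* At a random point, an iterated derivative of `f` in random directions usually
  equals `f`, since the other terms of the sum defining it vanish there. Hence a few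
  derivatives, which have lower degree and so are few, determine `f` up to a still lighter function.
* *Very light functions.* A function of degree at most `r` is determined by its values on any
  translate of the `N` points of Hamming weight at most `r`. On a random translate a very light
  function is almost always zero, so it is counted by a Hamming ball in `F₂^N`.
-/

namespace ReedMuller

open Finset
open scoped BigOperators

/-! ### Uniform probability on finite types -/

section Prob

variable {α β γ : Type*} [Fintype α] [Fintype β]

open Classical in
/-- The probability that a uniformly random point of the finite type `α` satisfies `p`. -/
noncomputable def prob (p : α → Prop) : ℝ := 𝔼 x, if p x then 1 else 0

lemma prob_eq_card_div (p : α → Prop) [DecidablePred p] :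
    prob p = #{x | p x} / Fintype.card α := by
  have : prob p = 𝔼 x, if p x then (1 : ℝ) else 0 := by unfold prob; congr!
  rw [this, Fintype.expect_eq_sum_div_card, sum_boole]

lemma prob_mul_card (p : α → Prop) [DecidablePred p] :
    prob p * Fintype.card α = #{x | p x} := by
  rw [prob_eq_card_div, div_mul_cancel_of_imp]
  intro card_eq
  have : IsEmpty α := Fintype.card_eq_zero_iff.mp (by exact_mod_cast card_eq)
  simp

lemma prob_nonneg (p : α → Prop) : 0 ≤ prob p :=
  expect_nonneg fun _ _ => by split_ifs <;> norm_num

lemma prob_mono {p q : α → Prop} (h : ∀ x, p x → q x) : prob p ≤ prob q := by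
  refine expect_le_expect fun x _ => ?_
  split_ifs with hp hq
  exacts [le_rfl, absurd (h x hp) hq, zero_le_one, le_rfl]

lemma prob_le_one (p : α → Prop) : prob p ≤ 1 := by
  rcases isEmpty_or_nonempty α with hα | hα
  · simp [prob]
  · exact expect_le univ_nonempty fun x _ => by split_ifs <;> norm_num

lemma prob_add_prob_not [Nonempty α] (p : α → Prop) : prob p + prob (fun x => ¬ p x) = 1 := by
  rw [prob, prob, ← expect_add_distrib]
  refine (expect_congr rfl fun x _ => ?_).trans (Fintype.expect_const 1)
  split_ifs <;> simp

lemma prob_or_le (p q : α → Prop) : prob (fun x => p x ∨ q x) ≤ prob p + prob q := by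
  rw [prob, prob, prob, ← expect_add_distrib]
  refine expect_le_expect fun x _ => ?_
  by_cases hp : p x <;> by_cases hq : q x <;> simp [hp, hq]

lemma prob_exists_mem_le (s : Finset γ) (p : γ → α → Prop) :
    prob (fun x => ∃ c ∈ s, p c x) ≤ ∑ c ∈ s, prob (p c) := by
  classical
  induction s using Finset.induction_on with
  | empty => simp [prob]
  | insert c s hc ih =>
    rw [sum_insert hc]
    simp only [exists_mem_insert]
    exact (prob_or_le _ _).trans (add_le_add_right ih _)

lemma expect_prob_comm (p : α → β → Prop) :
    𝔼 x, prob (fun y => p x y) = 𝔼 y, prob (fun x => p x y) :=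
  expect_comm ..

lemma mul_prob_le_expect {g : α → ℝ} (hg : ∀ x, 0 ≤ g x) (c : ℝ) :
    c * prob (fun x => c ≤ g x) ≤ 𝔼 x, g x := by
  rw [prob, mul_expect]
  refine expect_le_expect fun x _ => ?_
  split_ifs with h
  · rwa [mul_one]
  · rw [mul_zero]; exact hg x

lemma exists_card_le_two_mul_card_filter [Nonempty β] (X : Finset γ) {E : γ → β → ℝ}
    (hE : ∀ f y, 0 ≤ E f y) {μ : ℝ} (hμ : 0 < μ) (hX : ∀ f ∈ X, 𝔼 y, E f y ≤ μ) :
    ∃ y, (#X : ℝ) ≤ 2 * #{f ∈ X | E f y ≤ 2 * μ} := by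
  have half_le : ∀ f ∈ X, 1 / 2 ≤ prob fun y => E f y ≤ 2 * μ := fun f hf => by
    have markov := (mul_prob_le_expect (hE f) (2 * μ)).trans (hX f hf)
    have bad_le : prob (fun y => ¬ E f y ≤ 2 * μ) ≤ prob fun y => 2 * μ ≤ E f y :=
      prob_mono fun y h => (not_le.mp h).le
    have := prob_add_prob_not fun y => E f y ≤ 2 * μ
    nlinarith
  have avg : (#X : ℝ) / 2 ≤ 𝔼 y, (#{f ∈ X | E f y ≤ 2 * μ} : ℝ) := by
    calc (#X : ℝ) / 2 = ∑ _f ∈ X, (1 / 2 : ℝ) := by rw [sum_const, nsmul_eq_mul]; ring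
      _ ≤ ∑ f ∈ X, prob fun y => E f y ≤ 2 * μ := sum_le_sum half_le
      _ = 𝔼 y, (#{f ∈ X | E f y ≤ 2 * μ} : ℝ) := by
        simp only [prob, ← expect_sum_comm, sum_boole]
  obtain ⟨y, -, hy⟩ := exists_le_of_le_expect univ_nonempty avg
  exact ⟨y, by linarith⟩

lemma prob_forall_mem [Nonempty α] {ι : Type*} [Fintype ι] [DecidableEq ι] (E : α → Prop)
    (s : Finset ι) :
    prob (fun v : ι → α => ∀ i ∈ s, E (v i)) = prob E ^ #s := by
  classical
  have event_eq : ({v | ∀ i ∈ s, E (v i)} : Finset (ι → α))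
      = Fintype.piFinset fun i => if i ∈ s then univ.filter E else univ := by
    ext v
    simp only [mem_filter, mem_univ, true_and, Fintype.mem_piFinset]
    exact forall_congr' fun i => by split_ifs with hi <;> simp [hi]
  have card_ne : (Fintype.card α : ℝ) ≠ 0 := by exact_mod_cast Fintype.card_ne_zero
  rw [prob_eq_card_div, prob_eq_card_div, event_eq, Fintype.card_piFinset, Fintype.card_fun,
    Nat.cast_prod, Nat.cast_pow, ← card_univ (α := ι), ← prod_const, ← prod_div_distrib]
  calc ∏ i, ((#(if i ∈ s then univ.filter E else univ) : ℝ) / Fintype.card α)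
      = ∏ i, if i ∈ s then (#{x | E x} : ℝ) / Fintype.card α else 1 :=
        prod_congr rfl fun i _ => by split_ifs <;> simp [card_ne]
    _ = _ := by rw [prod_ite_mem, univ_inter, prod_const]

/-- A union bound over the `h`-subsets of the `2 * h` independent events, of which there are at
most `4 ^ h`. -/
lemma prob_le_card_filter_le [Nonempty α] (E : α → Prop) [DecidablePred E] (h : ℕ) {p : ℝ}
    (hE : prob E ≤ p) : prob (fun v : Fin (2 * h) → α => h ≤ #{i | E (v i)}) ≤ (4 * p) ^ h := by
  calc prob (fun v : Fin (2 * h) → α => h ≤ #{i | E (v i)})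
      ≤ prob (fun v : Fin (2 * h) → α => ∃ s ∈ powersetCard h univ, ∀ i ∈ s, E (v i)) := by
        refine prob_mono fun v hv => ?_
        obtain ⟨s, hs, hcard⟩ := exists_subset_card_eq hv
        exact ⟨s, mem_powersetCard.mpr ⟨subset_univ s, hcard⟩,
          fun i hi => (mem_filter.mp (hs hi)).2⟩
    _ ≤ ∑ s ∈ powersetCard h (univ : Finset (Fin (2 * h))), prob E ^ #s := by
        refine (prob_exists_mem_le _ _).trans_eq (sum_congr rfl fun s _ => ?_)
        exact prob_forall_mem E s
    _ = (2 * h).choose h * prob E ^ h := by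
        rw [sum_congr rfl fun s hs => by rw [(mem_powersetCard.mp hs).2], sum_const,
          card_powersetCard, card_univ, Fintype.card_fin, nsmul_eq_mul]
    _ ≤ 4 ^ h * p ^ h := by
        have : ((2 * h).choose h : ℝ) ≤ 4 ^ h := by
          have := (2 * h).choose_le_two_pow h
          rw [pow_mul] at this
          exact_mod_cast this
        exact mul_le_mul this (pow_le_pow_left₀ (prob_nonneg E) hE h)
          (pow_nonneg (prob_nonneg E) h) (by positivity)
    _ = (4 * p) ^ h := (mul_pow ..).symm

end Prob

section UniformCombination

variable {V : Type*} [AddCommGroup V] [Fintype V]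

lemma expect_add_right (φ : V → ℝ) (a : V) : 𝔼 x, φ (x + a) = 𝔼 x, φ x :=
  Fintype.expect_equiv (Equiv.addRight a) _ _ fun _ => rfl

lemma prob_add_right (p : V → Prop) (a : V) : prob (fun x => p (x + a)) = prob p := by
  classical exact expect_add_right (fun x => if p x then 1 else 0) a

lemma expect_comp_of_surjective {A : Type*} [AddCommGroup A] [Fintype A] (T : A →+ V)
    (hT : Function.Surjective T) (φ : V → ℝ) : 𝔼 v, φ (T v) = 𝔼 u, φ u := by
  have shift (u : V) : 𝔼 v, φ (T v) = 𝔼 v, φ (u + T v) := by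
    obtain ⟨a, rfl⟩ := hT u
    rw [← expect_add_right (fun v => φ (T v)) a]
    simp only [map_add, add_comm]
  calc 𝔼 v, φ (T v) = 𝔼 _u : V, 𝔼 v, φ (T v) := (Fintype.expect_const _).symm
    _ = 𝔼 u : V, 𝔼 v, φ (u + T v) := expect_congr rfl fun u _ => shift u
    _ = 𝔼 v, 𝔼 u : V, φ (u + T v) := expect_comm ..
    _ = 𝔼 _v : A, 𝔼 u, φ u := expect_congr rfl fun v _ => expect_add_right φ (T v)
    _ = 𝔼 u, φ u := Fintype.expect_const _

variable {F ι : Type*} [Field F] [Module F V] [Fintype ι] [DecidableEq ι]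

lemma expect_linearCombination {c : ι → F} (hc : c ≠ 0) (φ : V → ℝ) :
    𝔼 v : ι → V, φ (Fintype.linearCombination F v c) = 𝔼 u, φ u := by
  obtain ⟨i, hi⟩ := Function.ne_iff.mp hc
  let T : (ι → V) →+ V :=
    { toFun := fun v => Fintype.linearCombination F v c
      map_zero' := by simp [Fintype.linearCombination_apply]
      map_add' := by simp [Fintype.linearCombination_apply, sum_add_distrib] }
  refine expect_comp_of_surjective T (fun u => ⟨Pi.single i ((c i)⁻¹ • u), ?_⟩) φ
  change Fintype.linearCombination F (Pi.single i ((c i)⁻¹ • u)) c = u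
  rw [Fintype.linearCombination_apply, sum_eq_single i (fun j _ hj => by simp [hj]) (by simp),
    Pi.single_eq_same, smul_inv_smul₀ hi]

lemma prob_linearCombination {c : ι → F} (hc : c ≠ 0) (p : V → Prop) :
    prob (fun v : ι → V => p (Fintype.linearCombination F v c)) = prob p := by
  classical exact expect_linearCombination hc fun u => if p u then 1 else 0

/-- Pairwise independence of the points of a random affine subspace. -/
lemma expect_mul_linearCombination {c e : ι → F} (hce : c ≠ e) (φ ψ : V → ℝ) :
    𝔼 v : ι → V, 𝔼 x, φ (x + Fintype.linearCombination F v c)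
        * ψ (x + Fintype.linearCombination F v e) = (𝔼 x, φ x) * 𝔼 x, ψ x := by
  have shift (v : ι → V) : 𝔼 x, φ (x + Fintype.linearCombination F v c)
        * ψ (x + Fintype.linearCombination F v e)
      = 𝔼 x, φ x * ψ (x + Fintype.linearCombination F v (e - c)) := by
    rw [← expect_add_right (fun x => φ x * ψ (x + Fintype.linearCombination F v (e - c)))
      (Fintype.linearCombination F v c)]
    simp only [map_sub, add_add_sub_cancel]
  calc _ = 𝔼 v : ι → V, 𝔼 x, φ x * ψ (x + Fintype.linearCombination F v (e - c)) :=
        expect_congr rfl fun v _ => shift v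
    _ = 𝔼 x, φ x * 𝔼 v : ι → V, ψ (x + Fintype.linearCombination F v (e - c)) := by
        rw [expect_comm]
        simp only [mul_expect]
    _ = 𝔼 x, φ x * 𝔼 u, ψ u := by
        refine expect_congr rfl fun x _ => ?_
        rw [expect_linearCombination (sub_ne_zero.mpr hce.symm) fun u => ψ (x + u)]
        simp only [add_comm x, expect_add_right]
    _ = (𝔼 x, φ x) * 𝔼 x, ψ x := (expect_mul ..).symm

end UniformCombination

lemma card_le_card_mul_card_of_sub_mem {ι A B : Type*} [AddGroup A] (X : Finset ι)
    (π : ι → A) (Ψ : ι → B) (T : Finset B) (L : Finset A) (hT : ∀ p ∈ X, Ψ p ∈ T)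
    (hinj : ∀ p ∈ X, ∀ q ∈ X, Ψ p = Ψ q → π p = π q → p = q)
    (hL : ∀ p ∈ X, ∀ q ∈ X, Ψ p = Ψ q → π p - π q ∈ L) : #X ≤ #T * #L := by
  classical
  rw [mul_comm]
  refine card_le_mul_card_image_of_maps_to hT _ fun b _ => ?_
  rcases (X.filter (Ψ · = b)).eq_empty_or_nonempty with empty | ⟨q, hq⟩
  · simp [empty]
  obtain ⟨hqX, rfl⟩ := mem_filter.mp hq
  refine card_le_card_of_injOn (fun p => π p - π q) (fun p hp => ?_) fun p hp p' hp' h => ?_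
  · obtain ⟨hpX, hpq⟩ := mem_filter.mp hp
    exact hL p hpX q hqX hpq
  · obtain ⟨hpX, hpq⟩ := mem_filter.mp hp
    obtain ⟨hp'X, hp'q⟩ := mem_filter.mp hp'
    exact hinj p hpX p' hp'X (hpq.trans hp'q.symm) (sub_left_injective h)

/-! ### Functions of low degree -/

section LowDegree

/-- The number of multilinear monomials of degree less than `d` in `m` variables. Bounding degrees
strictly makes differentiation lower `d` by one with no exception at constants: `d = 0` is the zero
space. -/
def binomLt (m d : ℕ) : ℕ := ∑ i ∈ range d, m.choose i

lemma card_subtype_card_lt (m d : ℕ) :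
    Fintype.card {S : Finset (Fin m) // #S < d} = binomLt m d := by
  rw [Fintype.card_subtype, binomLt, card_eq_sum_card_fiberwise (f := card) (t := range d)
    fun S hS => by simpa using hS]
  refine sum_congr rfl fun i hi => ?_
  have fiber : ({S : Finset (Fin m) | #S < d} : Finset _).filter (#· = i)
      = powersetCard i univ := by
    ext S
    have := mem_range.mp hi
    simp only [mem_filter, mem_univ, true_and, mem_powersetCard, subset_univ]
    omega
  rw [fiber, card_powersetCard, card_univ, Fintype.card_fin]

variable {m n d e : ℕ}

/-- The multilinear monomial with set of variables `S`, as a function on `F₂^m`. -/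
def monomialFun (S : Finset (Fin m)) : (Fin m → ZMod 2) → ZMod 2 := fun x => ∏ i ∈ S, x i

lemma monomialFun_mul (S T : Finset (Fin m)) :
    monomialFun S * monomialFun T = monomialFun (S ∪ T) := by
  ext x
  have mul_self : ∀ a : ZMod 2, a * a = a := by decide
  simp only [monomialFun, Pi.mul_apply]
  rw [← prod_union_inter, ← prod_sdiff (inter_subset_union (s := S) (t := T)), mul_assoc, mul_self]

/-- The functions on `F₂^m` given by polynomials of degree less than `d`. -/
def degLT (m d : ℕ) : Submodule (ZMod 2) ((Fin m → ZMod 2) → ZMod 2) :=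
  Submodule.span (ZMod 2) (Set.range fun S : {S : Finset (Fin m) // #S < d} => monomialFun S.1)

lemma monomialFun_mem_degLT {S : Finset (Fin m)} (h : #S < d) : monomialFun S ∈ degLT m d :=
  Submodule.subset_span ⟨⟨S, h⟩, rfl⟩

lemma degLT_mono (h : d ≤ e) : degLT m d ≤ degLT m e :=
  Submodule.span_le.mpr (by rintro _ ⟨⟨S, hS⟩, rfl⟩; exact monomialFun_mem_degLT (hS.trans_le h))

/-- The characteristic vector of a set of coordinates. -/
def charVec (T : Finset (Fin m)) : Fin m → ZMod 2 := fun i => if i ∈ T then 1 else 0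

lemma monomialFun_charVec (S T : Finset (Fin m)) :
    monomialFun S (charVec T) = if S ⊆ T then 1 else 0 := by
  unfold monomialFun charVec
  split_ifs with h
  · exact prod_eq_one fun i hi => if_pos (h hi)
  · obtain ⟨i, hi, hiT⟩ := not_subset.mp h
    exact prod_eq_zero hi (if_neg hiT)

/-- The evaluation matrix of the monomials at the points `charVec T` is unitriangular for
inclusion. -/
lemma coeff_eq_zero_of_forall_charVec {c : {S : Finset (Fin m) // #S < d} → ZMod 2}
    (h : ∀ T : Finset (Fin m), #T < d → (∑ S, c S • monomialFun S.1) (charVec T) = 0) :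
    c = 0 := by
  ext ⟨T, hT⟩
  induction T using Finset.strongInduction with
  | H T ih =>
    have eval_eq := h T hT
    rw [Finset.sum_apply, sum_eq_single ⟨T, hT⟩] at eval_eq
    · simpa [monomialFun_charVec] using eval_eq
    · intro S _ hne
      rw [Pi.smul_apply, monomialFun_charVec]
      split_ifs with hST
      · rw [ih S.1 (hST.ssubset_of_ne fun eq => hne (Subtype.ext eq)) S.2, Pi.zero_apply, zero_smul]
      · exact smul_zero _
    · simp

lemma eq_zero_of_forall_charVec {f : (Fin m → ZMod 2) → ZMod 2} (hf : f ∈ degLT m d)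
    (h : ∀ T : Finset (Fin m), #T < d → f (charVec T) = 0) : f = 0 := by
  obtain ⟨c, rfl⟩ := (Submodule.mem_span_range_iff_exists_fun _).mp hf
  simp [coeff_eq_zero_of_forall_charVec h]

lemma linearIndependent_monomialFun (m d : ℕ) :
    LinearIndependent (ZMod 2) fun S : {S : Finset (Fin m) // #S < d} => monomialFun S.1 := by
  refine Fintype.linearIndependent_iff.mpr fun c hc => congrFun ?_
  exact coeff_eq_zero_of_forall_charVec fun T _ => by rw [hc, Pi.zero_apply]

open Classical in
/-- `degLT m d` as a finite set, for counting. -/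
noncomputable def degLTFinset (m d : ℕ) : Finset ((Fin m → ZMod 2) → ZMod 2) :=
  {f | f ∈ degLT m d}

lemma mem_degLTFinset {f : (Fin m → ZMod 2) → ZMod 2} : f ∈ degLTFinset m d ↔ f ∈ degLT m d := by
  simp [degLTFinset]

lemma card_degLTFinset (m d : ℕ) : #(degLTFinset m d) = 2 ^ binomLt m d := by
  classical
  have finrank_eq : Module.finrank (ZMod 2) (degLT m d) = binomLt m d :=
    (finrank_span_eq_card (linearIndependent_monomialFun m d)).trans (card_subtype_card_lt m d)
  rw [degLTFinset, ← Fintype.card_subtype, ← finrank_eq]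
  simpa using Module.card_eq_pow_finrank (K := ZMod 2) (V := degLT m d)

open scoped fwdDiff

lemma fwdDiff_monomialFun (y : Fin m → ZMod 2) (S : Finset (Fin m)) :
    Δ_[y] (monomialFun S) = ∑ T ∈ S.ssubsets, (∏ i ∈ S \ T, y i) • monomialFun T := by
  ext x
  simp only [fwdDiff, monomialFun, Pi.add_apply, Finset.sum_apply, Pi.smul_apply, smul_eq_mul]
  rw [prod_add, ← insert_erase (mem_powerset_self S), sum_insert (notMem_erase _ _), sdiff_self,
    bot_eq_empty, prod_empty, mul_one, add_sub_cancel_left]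
  exact sum_congr rfl fun T _ => mul_comm _ _

lemma fwdDiff_mem_degLT (y : Fin m → ZMod 2) {f : (Fin m → ZMod 2) → ZMod 2}
    (hf : f ∈ degLT m d) : Δ_[y] f ∈ degLT m (d - 1) := by
  unfold degLT at hf
  induction hf using Submodule.span_induction with
  | mem f hf =>
    obtain ⟨⟨S, hS⟩, rfl⟩ := hf
    rw [fwdDiff_monomialFun]
    refine Submodule.sum_mem _ fun T hT => Submodule.smul_mem _ _ (monomialFun_mem_degLT ?_)
    have : #T < #S := card_lt_card (mem_ssubsets.mp hT)
    omega
  | zero => exact (fwdDiff_const y (0 : ZMod 2)).symm ▸ Submodule.zero_mem _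
  | add f g _ _ hf hg => exact fwdDiff_add y f g ▸ Submodule.add_mem _ hf hg
  | smul a f _ hf => exact fwdDiff_const_smul y a f ▸ Submodule.smul_mem _ a hf

lemma comp_add_right_mem_degLT (y : Fin m → ZMod 2) {f : (Fin m → ZMod 2) → ZMod 2}
    (hf : f ∈ degLT m d) : (fun x => f (x + y)) ∈ degLT m d := by
  convert Submodule.add_mem _ (degLT_mono (Nat.sub_le d 1) (fwdDiff_mem_degLT y hf)) hf using 1
  exact funext fun x => (sub_add_cancel _ _).symm

lemma mul_mem_degLT {f g : (Fin m → ZMod 2) → ZMod 2}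
    (hf : f ∈ degLT m (d + 1)) (hg : g ∈ degLT m (e + 1)) : f * g ∈ degLT m (d + e + 1) := by
  have mul_le : degLT m (d + 1) * degLT m (e + 1) ≤ degLT m (d + e + 1) := by
    rw [degLT, degLT, Submodule.span_mul_span, Submodule.span_le]
    rintro _ ⟨_, ⟨S, rfl⟩, _, ⟨T, rfl⟩, rfl⟩
    change monomialFun S.1 * monomialFun T.1 ∈ degLT m (d + e + 1)
    rw [monomialFun_mul]
    have := card_union_le S.1 T.1
    exact monomialFun_mem_degLT (by omega)
  exact mul_le (Submodule.mul_mem_mul hf hg)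

lemma prod_mem_degLT {ι : Type*} {S : Finset ι} {f : ι → (Fin m → ZMod 2) → ZMod 2}
    (hf : ∀ i ∈ S, f i ∈ degLT m 2) : ∏ i ∈ S, f i ∈ degLT m (#S + 1) := by
  classical
  induction S using Finset.induction_on with
  | empty => exact monomialFun_mem_degLT (S := ∅) (by simp)
  | insert i S hi ih =>
    rw [prod_insert hi, card_insert_of_notMem hi, add_comm #S 1]
    exact mul_mem_degLT (hf i (mem_insert_self i S)) (ih fun j hj => hf j (mem_insert_of_mem hj))

lemma linearMap_mem_degLT (φ : (Fin m → ZMod 2) →ₗ[ZMod 2] ZMod 2) :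
    (φ : (Fin m → ZMod 2) → ZMod 2) ∈ degLT m 2 := by
  have expansion : (φ : (Fin m → ZMod 2) → ZMod 2)
      = ∑ i, φ (Pi.single i 1) • monomialFun {i} := by
    ext x
    have single_eq (i : Fin m) :
        (Pi.single i 1 : Fin m → ZMod 2) = fun j => if i = j then 1 else 0 :=
      funext fun j => by simp [Pi.single_apply, eq_comm]
    simp [LinearMap.pi_apply_eq_sum_univ φ x, monomialFun, mul_comm, single_eq]
  rw [expansion]
  exact Submodule.sum_mem _ fun i _ => Submodule.smul_mem _ _ (monomialFun_mem_degLT (by simp))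

lemma comp_linearMap_mem_degLT (L : (Fin m → ZMod 2) →ₗ[ZMod 2] (Fin n → ZMod 2))
    {f : (Fin n → ZMod 2) → ZMod 2} (hf : f ∈ degLT n d) : f ∘ L ∈ degLT m d := by
  have comap_le : degLT n d ≤ (degLT m d).comap (LinearMap.funLeft (ZMod 2) (ZMod 2) L) := by
    refine Submodule.span_le.mpr ?_
    rintro _ ⟨⟨S, hS⟩, rfl⟩
    have comp_eq : monomialFun S ∘ L = ∏ i ∈ S, ((LinearMap.proj i).comp L : _ → ZMod 2) := by
      ext x
      simp [monomialFun]
    change monomialFun S ∘ L ∈ degLT m d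
    rw [comp_eq]
    exact degLT_mono hS (prod_mem_degLT fun i _ => linearMap_mem_degLT _)
  exact comap_le hf

end LowDegree

/-! ### Functions of small weight -/

section Weight

variable {α : Type*} [Fintype α]

/-- The fraction of points at which a Boolean function is nonzero. -/
noncomputable def relWeight (f : α → ZMod 2) : ℝ := prob fun x => f x ≠ 0

lemma relWeight_nonneg (f : α → ZMod 2) : 0 ≤ relWeight f := prob_nonneg _

lemma relWeight_le_one (f : α → ZMod 2) : relWeight f ≤ 1 := prob_le_one _

/-- The functions of degree less than `d` and relative weight at most `w`. -/
noncomputable def lightFinset (m d : ℕ) (w : ℝ) : Finset ((Fin m → ZMod 2) → ZMod 2) :=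
  {f ∈ degLTFinset m d | relWeight f ≤ w}

variable {m d : ℕ} {w : ℝ} {f : (Fin m → ZMod 2) → ZMod 2}

lemma mem_lightFinset : f ∈ lightFinset m d w ↔ f ∈ degLT m d ∧ relWeight f ≤ w := by
  rw [lightFinset, mem_filter, mem_degLTFinset]

end Weight

section HammingBall

lemma card_relWeight_le_mul_exp_le {ι : Type*} [Fintype ι] [DecidableEq ι] {t u : ℝ}
    (ht : 0 ≤ t) :
    #{s : ι → ZMod 2 | relWeight s ≤ u} * Real.exp (-(t * (u * Fintype.card ι)))
      ≤ (1 + Real.exp (-t)) ^ Fintype.card ι := by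
  have generating_sum : ∑ s : ι → ZMod 2, ∏ i, (if s i ≠ 0 then Real.exp (-t) else 1)
      = (1 + Real.exp (-t)) ^ Fintype.card ι := by
    rw [← Fintype.prod_sum fun _ b => if b ≠ 0 then Real.exp (-t) else 1, prod_const, card_univ]
    congr 1
    exact Fin.sum_univ_two _
  rw [← generating_sum, ← nsmul_eq_mul]
  refine (card_nsmul_le_sum _ _ _ fun s hs => ?_).trans
    (sum_le_univ_sum_of_nonneg fun s => prod_nonneg fun i _ => by split_ifs <;> positivity)
  have card_le : (#{i | s i ≠ 0} : ℝ) ≤ u * Fintype.card ι := by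
    rw [← prob_mul_card]
    exact mul_le_mul_of_nonneg_right (mem_filter.mp hs).2 (Nat.cast_nonneg _)
  rw [prod_ite, prod_const_one, mul_one, prod_const, ← Real.exp_nat_mul, Real.exp_le_exp]
  nlinarith

lemma card_relWeight_le_two_mul_sq {ι : Type*} [Fintype ι] [DecidableEq ι] {s : ℝ} (hs : 0 < s)
    (hs1 : s ≤ 1) :
    (#{g : ι → ZMod 2 | relWeight g ≤ 2 * s ^ 2} : ℝ) ≤ Real.exp (3 * s * Fintype.card ι) := by
  have chernoff := card_relWeight_le_mul_exp_le (ι := ι) (u := 2 * s ^ 2)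
    (neg_nonneg.mpr (Real.log_nonpos hs.le hs1))
  rw [neg_neg, Real.exp_log hs] at chernoff
  have entropy : -Real.log s * s ≤ 1 := by
    have := Real.log_le_sub_one_of_pos (inv_pos.mpr hs)
    rw [Real.log_inv] at this
    have := mul_le_mul_of_nonneg_right this hs.le
    rw [sub_mul, inv_mul_cancel₀ hs.ne'] at this
    linarith
  have exponent_le : -Real.log s * (2 * s ^ 2 * Fintype.card ι) ≤ 2 * s * Fintype.card ι := by
    calc _ = (-Real.log s * s) * (2 * s * Fintype.card ι) := by ring
      _ ≤ 1 * (2 * s * Fintype.card ι) := by gcongr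
      _ = _ := one_mul _
  rw [← le_div_iff₀ (Real.exp_pos _), div_eq_mul_inv, ← Real.exp_neg, neg_neg] at chernoff
  calc _ ≤ (1 + s) ^ Fintype.card ι * Real.exp (-Real.log s * (2 * s ^ 2 * Fintype.card ι)) :=
        chernoff
    _ ≤ Real.exp (s * Fintype.card ι) * Real.exp (2 * s * Fintype.card ι) := by
        rw [mul_comm s, Real.exp_nat_mul, add_comm]
        gcongr
        exact Real.add_one_le_exp s
    _ = _ := by rw [← Real.exp_add]; ring_nf

lemma expect_relWeight_translate_le {ι V : Type*} [Fintype ι] [AddCommGroup V] [Fintype V]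
    (p : ι → V) (f : V → ZMod 2) : 𝔼 y, relWeight (fun i => f (p i + y)) ≤ relWeight f := by
  have translate (i : ι) : prob (fun y => f (p i + y) ≠ 0) = relWeight f := by
    simp only [add_comm (p i)]
    exact prob_add_right (fun x => f x ≠ 0) (p i)
  unfold relWeight
  rw [expect_prob_comm, expect_congr rfl fun i _ => translate i]
  rcases isEmpty_or_nonempty ι with hι | hι
  · simpa using prob_nonneg _
  · exact (Fintype.expect_const _).le

/-- A low-degree function is determined by its values on a random translate of the points
`charVec T`, and a light one is almost always zero there. -/
theorem card_lightFinset_sq_le (m d : ℕ) {s : ℝ} (hs : 0 < s) (hs1 : s ≤ 1) :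
    (#(lightFinset m d (s ^ 2)) : ℝ) ≤ 2 * Real.exp (3 * s * binomLt m d) := by
  let values (y : Fin m → ZMod 2) (f : (Fin m → ZMod 2) → ZMod 2)
    (T : {T : Finset (Fin m) // #T < d}) : ZMod 2 := f (charVec T.1 + y)
  obtain ⟨y, hy⟩ := exists_card_le_two_mul_card_filter (lightFinset m d (s ^ 2))
    (E := fun f y => relWeight (values y f)) (fun _ _ => relWeight_nonneg _) (pow_pos hs 2)
    fun f hf => (expect_relWeight_translate_le _ f).trans (mem_lightFinset.mp hf).2
  have values_inj : Set.InjOn (values y) (degLT m d) := fun f hf g hg hfg => by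
    have vanish := eq_zero_of_forall_charVec
      (comp_add_right_mem_degLT y (Submodule.sub_mem _ hf hg)) fun T hT =>
        sub_eq_zero.mpr (congrFun hfg ⟨T, hT⟩)
    ext x
    simpa [sub_eq_zero] using congrFun vanish (x - y)
  have card_le : #{f ∈ lightFinset m d (s ^ 2) | relWeight (values y f) ≤ 2 * s ^ 2}
      ≤ #{g : {T : Finset (Fin m) // #T < d} → ZMod 2 | relWeight g ≤ 2 * s ^ 2} :=
    card_le_card_of_injOn (values y) (fun f hf => by simpa using (mem_filter.mp hf).2)
      (values_inj.mono fun f hf => (mem_lightFinset.mp (mem_filter.mp hf).1).1)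
  rw [← card_subtype_card_lt]
  refine hy.trans ?_
  gcongr
  exact (Nat.cast_le.mpr card_le).trans (card_relWeight_le_two_mul_sq hs hs1)

end HammingBall

/-! ### Derivatives -/

section RandomDerivatives

open scoped fwdDiff

variable {V : Type*} [AddCommGroup V] [Module (ZMod 2) V] {m d k h : ℕ}

/-- The iterated derivative of `f` in the directions `v i`; there are no signs over `F₂`. -/
def iterDeriv (v : Fin k → V) (f : V → ZMod 2) : V → ZMod 2 :=
  fun x => ∑ c : Fin k → ZMod 2, f (x + Fintype.linearCombination (ZMod 2) v c)

lemma iterDeriv_succ (v : Fin (k + 1) → V) (f : V → ZMod 2) :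
    iterDeriv v f = Δ_[v 0] (iterDeriv (fun i => v i.succ) f) := by
  ext x
  unfold iterDeriv
  rw [← Equiv.sum_comp (Fin.consEquiv fun _ => ZMod 2), Fintype.sum_prod_type,
    show (univ : Finset (ZMod 2)) = {0, 1} from rfl, sum_pair (by decide), add_comm]
  simp [fwdDiff, Fintype.linearCombination_apply, Fin.sum_univ_succ, add_assoc, CharTwo.sub_eq_add]

lemma iterDeriv_mem_degLT (v : Fin k → Fin m → ZMod 2) {f : (Fin m → ZMod 2) → ZMod 2}
    (hf : f ∈ degLT m d) : iterDeriv v f ∈ degLT m (d - k) := by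
  induction k with
  | zero =>
    have : iterDeriv v f = f := by
      ext x
      simp [iterDeriv, Fintype.linearCombination_apply]
    rwa [this]
  | succ k ih =>
    rw [iterDeriv_succ]
    exact fwdDiff_mem_degLT (v 0) (ih fun i => v i.succ)

lemma prob_iterDeriv_ne_le [Fintype V] (f : V → ZMod 2) (x : V) :
    prob (fun v : Fin k → V => iterDeriv v f x ≠ f x) ≤ 2 ^ k * relWeight f := by
  have uniform (c : Fin k → ZMod 2) (hc : c ≠ 0) :
      prob (fun v : Fin k → V => f (x + Fintype.linearCombination (ZMod 2) v c) ≠ 0)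
        = relWeight f := by
    calc _ = prob fun u => f (x + u) ≠ 0 := prob_linearCombination hc fun u => f (x + u) ≠ 0
      _ = relWeight f := by
          simp only [add_comm x]
          exact prob_add_right (fun u => f u ≠ 0) x
  calc prob (fun v : Fin k → V => iterDeriv v f x ≠ f x)
      ≤ prob (fun v : Fin k → V => ∃ c ∈ univ.erase (0 : Fin k → ZMod 2),
          f (x + Fintype.linearCombination (ZMod 2) v c) ≠ 0) := by
        refine prob_mono fun v hne => by_contra fun all_zero => hne ?_
        push Not at all_zero
        rw [iterDeriv, ← add_sum_erase _ _ (mem_univ 0), sum_eq_zero all_zero, map_zero]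
        simp
    _ ≤ ∑ _c ∈ univ.erase (0 : Fin k → ZMod 2), relWeight f :=
        (prob_exists_mem_le _ _).trans_eq
          (sum_congr rfl fun c hc => uniform c (ne_of_mem_erase hc))
    _ ≤ ∑ _c : Fin k → ZMod 2, relWeight f :=
        sum_le_sum_of_subset_of_nonneg (erase_subset _ _) fun _ _ _ => relWeight_nonneg f
    _ = 2 ^ k * relWeight f := by simp

/-- The probability that at least half of the `2 * h` iterated derivatives of `f` along the
direction tuples `v i` differ from `f` at a random point. -/
noncomputable def derivError [Fintype V] (v : Fin (2 * h) → Fin k → V) (f : V → ZMod 2) : ℝ :=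
  prob fun x => h ≤ #{i | iterDeriv (v i) f x ≠ f x}

lemma expect_derivError_le [Fintype V] (f : V → ZMod 2) :
    𝔼 v : Fin (2 * h) → Fin k → V, derivError v f ≤ (4 * (2 ^ k * relWeight f)) ^ h := by
  unfold derivError
  rw [expect_prob_comm]
  exact expect_le univ_nonempty fun x _ =>
    prob_le_card_filter_le (fun v : Fin k → V => iterDeriv v f x ≠ f x) h (prob_iterDeriv_ne_le f x)

/-- Where neither function disagrees with half of the common derivatives, some derivative agrees
with both. -/
lemma relWeight_sub_le_derivError [Fintype V] {v : Fin (2 * h) → Fin k → V} {f g : V → ZMod 2}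
    (hfg : ∀ i, iterDeriv (v i) f = iterDeriv (v i) g) :
    relWeight (f - g) ≤ derivError v f + derivError v g := by
  refine (prob_mono fun x hne => ?_).trans (prob_or_le _ _)
  by_contra! few
  have cover : univ ⊆ univ.filter (fun i => iterDeriv (v i) f x ≠ f x)
      ∪ univ.filter (fun i => iterDeriv (v i) g x ≠ g x) := fun i _ => by
    by_contra hi
    simp only [mem_union, mem_filter, mem_univ, true_and, not_or, not_not] at hi
    exact hne (sub_eq_zero.mpr (by rw [← hi.1, ← hi.2, hfg i]))
  have := (card_le_card cover).trans (card_union_le _ _)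
  rw [card_univ, Fintype.card_fin] at this
  omega

theorem card_lightFinset_le_deriv (m d k h : ℕ) {w : ℝ} (hw : 0 < w) :
    (#(lightFinset m d w) : ℝ)
      ≤ 2 * (2 ^ (2 * h * binomLt m (d - k)) * #(lightFinset m d (4 * (4 * (2 ^ k * w)) ^ h))) := by
  set μ := (4 * (2 ^ k * w)) ^ h
  obtain ⟨v, hv⟩ := exists_card_le_two_mul_card_filter (lightFinset m d w)
    (E := fun f (v : Fin (2 * h) → Fin k → Fin m → ZMod 2) => derivError v f)
    (fun _ _ => prob_nonneg _) (μ := μ) (by positivity) fun f hf =>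
      (expect_derivError_le f).trans <| by
        have weight_le := (mem_lightFinset.mp hf).2
        have weight_nonneg := relWeight_nonneg f
        exact pow_le_pow_left₀ (by positivity) (by gcongr) h
  refine hv.trans ?_
  have fibres := card_le_card_mul_card_of_sub_mem
    {f ∈ lightFinset m d w | derivError v f ≤ 2 * μ} id (fun f i => iterDeriv (v i) f)
    (Fintype.piFinset fun _ => degLTFinset m (d - k)) (lightFinset m d (4 * μ))
    (fun f hf => Fintype.mem_piFinset.mpr fun i => mem_degLTFinset.mpr <|
      iterDeriv_mem_degLT _ (mem_lightFinset.mp (mem_filter.mp hf).1).1)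
    (fun _ _ _ _ _ h => h) fun f hf g hg hfg => by
      obtain ⟨hf, errf⟩ := mem_filter.mp hf
      obtain ⟨hg, errg⟩ := mem_filter.mp hg
      refine mem_lightFinset.mpr
        ⟨Submodule.sub_mem _ (mem_lightFinset.mp hf).1 (mem_lightFinset.mp hg).1, ?_⟩
      calc relWeight (f - g) ≤ _ := relWeight_sub_le_derivError (congrFun hfg)
        _ ≤ 4 * μ := by linarith
  rw [Fintype.card_piFinset, prod_const, card_degLTFinset, card_univ, Fintype.card_fin, ← pow_mul,
    mul_comm (binomLt m (d - k))] at fibres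
  gcongr
  exact_mod_cast fibres

end RandomDerivatives

/-! ### Averages over random cosets -/

section RandomCosets

variable {V F ι : Type*} [AddCommGroup V] [Fintype V] [Field F] [Module F V] [Fintype F]
  [Fintype ι] [DecidableEq ι]

variable (F) in
/-- The mean of `φ` over the coset `x + span v`, where each point is weighted by the number of its
representations as `x` plus a linear combination of the `v i`. -/
noncomputable def cosetMean (φ : V → ℝ) (v : ι → V) (x : V) : ℝ :=
  𝔼 c : ι → F, φ (x + Fintype.linearCombination F v c)

/-- By pairwise independence only the diagonal terms of the square survive. -/
lemma expect_cosetMean_sq {φ : V → ℝ} (hφ : 𝔼 x, φ x = 0) :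
    𝔼 v : ι → V, 𝔼 x, cosetMean F φ v x ^ 2
      = (𝔼 x, φ x ^ 2) / Fintype.card F ^ Fintype.card ι := by
  classical
  have covariance (c e : ι → F) : 𝔼 v : ι → V, 𝔼 x, φ (x + Fintype.linearCombination F v c)
      * φ (x + Fintype.linearCombination F v e) = if c = e then 𝔼 x, φ x ^ 2 else 0 := by
    split_ifs with hce
    · subst hce
      calc _ = 𝔼 _v : ι → V, 𝔼 x, φ x ^ 2 := expect_congr rfl fun v _ => by
            simp only [← sq]
            exact expect_add_right (fun x => φ x ^ 2) _
        _ = 𝔼 x, φ x ^ 2 := Fintype.expect_const _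
    · rw [expect_mul_linearCombination hce φ φ, hφ, zero_mul]
  calc 𝔼 v : ι → V, 𝔼 x, cosetMean F φ v x ^ 2
      = 𝔼 v : ι → V, 𝔼 x, 𝔼 c : ι → F, 𝔼 e : ι → F, φ (x + Fintype.linearCombination F v c)
          * φ (x + Fintype.linearCombination F v e) := by
        simp only [cosetMean, sq, Fintype.expect_mul_expect]
    _ = 𝔼 c : ι → F, 𝔼 e : ι → F, 𝔼 v : ι → V, 𝔼 x, φ (x + Fintype.linearCombination F v c)
          * φ (x + Fintype.linearCombination F v e) := by
        simp only [expect_comm (s := (univ : Finset V)) (t := (univ : Finset (ι → F))),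
          expect_comm (s := (univ : Finset (ι → V))) (t := (univ : Finset (ι → F)))]
    _ = 𝔼 c : ι → F, (𝔼 x, φ x ^ 2) / Fintype.card (ι → F) :=
        expect_congr rfl fun c _ => by
          simp only [covariance]
          rw [Fintype.expect_eq_sum_div_card, sum_ite_eq, if_pos (mem_univ c)]
    _ = _ := by rw [Fintype.expect_const, Fintype.card_fun, Nat.cast_pow]

/-- Chebyshev's inequality for the coset means of a function with positive mean. -/
lemma expect_prob_cosetMean_nonpos_le {φ : V → ℝ} {β : ℝ} (hβ : 0 < β) (hmean : β ≤ 𝔼 x, φ x)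
    (hφ : ∀ x, φ x ^ 2 ≤ 1) :
    𝔼 v : ι → V, prob (fun x => cosetMean F φ v x ≤ 0)
      ≤ 1 / (β ^ 2 * Fintype.card F ^ Fintype.card ι) := by
  set b := 𝔼 x, φ x
  have centered_mean : 𝔼 x, (φ x - b) = 0 := by
    rw [expect_sub_distrib, Fintype.expect_const, sub_self]
  have variance_le : 𝔼 x, (φ x - b) ^ 2 ≤ 1 := by
    calc 𝔼 x, (φ x - b) ^ 2 = 𝔼 x, φ x ^ 2 - 2 * b * 𝔼 x, (φ x - b) - b ^ 2 := by
          rw [mul_expect, ← expect_sub_distrib, ← Fintype.expect_const (ι := V) (b ^ 2),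
            ← expect_sub_distrib]
          exact expect_congr rfl fun x _ => by ring
      _ ≤ 𝔼 x, φ x ^ 2 := by rw [centered_mean]; linarith [sq_nonneg b]
      _ ≤ 1 := expect_le univ_nonempty fun x _ => hφ x
  have centered_cosetMean (v : ι → V) (x : V) :
      cosetMean F (fun x => φ x - b) v x = cosetMean F φ v x - b := by
    rw [cosetMean, cosetMean, expect_sub_distrib, Fintype.expect_const]
  have markov (v : ι → V) : β ^ 2 * prob (fun x => cosetMean F φ v x ≤ 0)
      ≤ 𝔼 x, cosetMean F (fun x => φ x - b) v x ^ 2 := by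
    refine le_trans ?_ (mul_prob_le_expect (fun x => sq_nonneg _) (β ^ 2))
    gcongr
    refine prob_mono fun x hx => ?_
    rw [centered_cosetMean]
    nlinarith
  rw [le_div_iff₀' (by positivity), mul_right_comm, mul_expect]
  calc _ ≤ (𝔼 v : ι → V, 𝔼 x, cosetMean F (fun x => φ x - b) v x ^ 2)
        * Fintype.card F ^ Fintype.card ι := by
        gcongr with v
        exact markov v
    _ = 𝔼 x, (φ x - b) ^ 2 := by
        rw [expect_cosetMean_sq centered_mean, div_mul_cancel₀ _ (by positivity)]
    _ ≤ 1 := variance_le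

end RandomCosets

section SignCosets

/-- The character `(-1) ^ a` of `F₂`. -/
def signChar (a : ZMod 2) : ℝ := if a = 0 then 1 else -1

lemma signChar_add (a b : ZMod 2) : signChar (a + b) = signChar a * signChar b := by
  have add_eq_zero : ∀ a b : ZMod 2, a + b = 0 ↔ (a = 0 ↔ b = 0) := by decide
  unfold signChar
  by_cases ha : a = 0 <;> by_cases hb : b = 0 <;> simp [add_eq_zero, ha, hb]

lemma expect_signChar {α : Type*} [Fintype α] [Nonempty α] (f : α → ZMod 2) :
    𝔼 x, signChar (f x) = 1 - 2 * relWeight f := by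
  rw [relWeight, prob, mul_expect, ← Fintype.expect_const (ι := α) (1 : ℝ), ← expect_sub_distrib]
  refine expect_congr rfl fun x _ => ?_
  unfold signChar
  by_cases hx : f x = 0 <;> norm_num [hx]

variable {V : Type*} [AddCommGroup V] [Fintype V] [Module (ZMod 2) V] {m t d : ℕ}

/-- The probability that the signs of `f` on the coset of `span v` through a random point have
nonpositive mean, that is, that majority voting on this coset fails to return `0`. -/
noncomputable def cosetError (v : Fin t → V) (f : V → ZMod 2) : ℝ :=
  prob fun x => cosetMean (ZMod 2) (signChar ∘ f) v x ≤ 0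

lemma expect_cosetError_le {f : V → ZMod 2} {β : ℝ} (hβ : 0 < β) (hf : relWeight f ≤ (1 - β) / 2) :
    𝔼 v : Fin t → V, cosetError v f ≤ 1 / (β ^ 2 * 2 ^ t) := by
  have bound := expect_prob_cosetMean_nonpos_le (F := ZMod 2) (ι := Fin t) (φ := signChar ∘ f) hβ
    (by have := expect_signChar f; simp only [Function.comp_apply]; linarith)
    fun x => by simp only [signChar, Function.comp_apply]; split_ifs <;> norm_num
  rwa [Fintype.card_fin, ZMod.card] at bound

/-- The difference is constant on the cosets, so where it is nonzero the coset means of the signs of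
`f` and `g` are opposite. -/
lemma relWeight_sub_le_cosetError {v : Fin t → V} {f g : V → ZMod 2}
    (hfg : ∀ x c, (f - g) (x + Fintype.linearCombination (ZMod 2) v c) = (f - g) x) :
    relWeight (f - g) ≤ cosetError v f + cosetError v g := by
  refine (prob_mono fun x hne => ?_).trans (prob_or_le _ _)
  have opposite :
      cosetMean (ZMod 2) (signChar ∘ f) v x = -cosetMean (ZMod 2) (signChar ∘ g) v x := by
    rw [cosetMean, cosetMean, ← expect_neg_distrib]
    refine expect_congr rfl fun c _ => ?_
    have := hfg x c
    set y := x + Fintype.linearCombination (ZMod 2) v c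
    have split : f y = (f - g) x + g y := by rw [← this, Pi.sub_apply, sub_add_cancel]
    rw [Function.comp_apply, Function.comp_apply, split, signChar_add, signChar, if_neg hne,
      neg_one_mul]
  rw [opposite]
  exact (le_total (cosetMean (ZMod 2) (signChar ∘ g) v x) 0).symm.imp_left neg_nonpos.mpr

lemma exists_surjective_linearCombination_eq_zero {F : Type*} [Field F] (v : Fin t → Fin m → F) :
    ∃ L : (Fin m → F) →ₗ[F] (Fin (m - t) → F),
      Function.Surjective L ∧ ∀ c, L (Fintype.linearCombination F v c) = 0 := by
  set W := Submodule.span F (Set.range v) with hW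
  have finrank_le : Module.finrank F W ≤ t := by
    simpa [Set.finrank] using finrank_range_le_card (R := F) v
  have finrank_quotient := W.finrank_quotient_add_finrank
  rw [Module.finrank_fin_fun] at finrank_quotient
  have le_finrank : m - t ≤ Module.finrank F ((Fin m → F) ⧸ W) := by omega
  let e := (Module.finBasis F ((Fin m → F) ⧸ W)).equivFun
  refine ⟨LinearMap.funLeft F F (Fin.castLE le_finrank) ∘ₗ e.toLinearMap ∘ₗ W.mkQ,
    (LinearMap.funLeft_surjective_of_injective F F _ (Fin.castLE_injective le_finrank)).comp
      (e.surjective.comp W.mkQ_surjective), fun c => ?_⟩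
  have mkQ_eq : W.mkQ (Fintype.linearCombination F v c) = 0 := by
    rw [Submodule.mkQ_apply, Submodule.Quotient.mk_eq_zero, hW, ← Fintype.range_linearCombination]
    exact LinearMap.mem_range_self _ c
  simp [mkQ_eq]

theorem card_lightFinset_le_coset (m d t : ℕ) {β : ℝ} (hβ : 0 < β) :
    (#(lightFinset m d ((1 - β) / 2)) : ℝ)
      ≤ 2 * (2 ^ binomLt m d / 2 ^ binomLt (m - t) d
          * #(lightFinset m d (4 / (β ^ 2 * 2 ^ t)))) := by
  obtain ⟨v, hv⟩ := exists_card_le_two_mul_card_filter (lightFinset m d ((1 - β) / 2))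
    (E := fun f (v : Fin t → Fin m → ZMod 2) => cosetError v f) (fun _ _ => prob_nonneg _)
    (μ := 1 / (β ^ 2 * 2 ^ t)) (by positivity) fun f hf =>
      expect_cosetError_le hβ (mem_lightFinset.mp hf).2
  obtain ⟨L, hL, hLv⟩ := exists_surjective_linearCombination_eq_zero v
  set G := {f ∈ lightFinset m d ((1 - β) / 2) | cosetError v f ≤ 2 * (1 / (β ^ 2 * 2 ^ t))}
  have mem_degLT {f : (Fin m → ZMod 2) → ZMod 2} (hf : f ∈ G) : f ∈ degLT m d :=
    (mem_lightFinset.mp (mem_filter.mp hf).1).1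
  have fibres := card_le_card_mul_card_of_sub_mem (G ×ˢ degLTFinset (m - t) d) Prod.fst
    (fun p => p.1 + p.2 ∘ L) (degLTFinset m d) (lightFinset m d (4 / (β ^ 2 * 2 ^ t)))
    (fun p hp => mem_degLTFinset.mpr <| Submodule.add_mem _ (mem_degLT (mem_product.mp hp).1) <|
      comp_linearMap_mem_degLT L (mem_degLTFinset.mp (mem_product.mp hp).2))
    (fun p _ q _ eq fst_eq => Prod.ext fst_eq <| hL.injective_comp_right <| by
      simpa only [fst_eq, add_right_inj] using eq)
    fun p hp q hq eq => by
      obtain ⟨hp, -⟩ := mem_product.mp hp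
      obtain ⟨hq, -⟩ := mem_product.mp hq
      have sub_eq : p.1 - q.1 = (q.2 - p.2) ∘ L :=
        sub_eq_sub_iff_add_eq_add.mpr (eq.trans (add_comm _ _))
      refine mem_lightFinset.mpr ⟨Submodule.sub_mem _ (mem_degLT hp) (mem_degLT hq), ?_⟩
      calc relWeight (p.1 - q.1) ≤ cosetError v p.1 + cosetError v q.1 :=
            relWeight_sub_le_cosetError fun x c => by
              rw [sub_eq, Function.comp_apply, Function.comp_apply, map_add, hLv, add_zero]
        _ ≤ 2 * (1 / (β ^ 2 * 2 ^ t)) + 2 * (1 / (β ^ 2 * 2 ^ t)) :=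
            add_le_add (mem_filter.mp hp).2 (mem_filter.mp hq).2
        _ = 4 / (β ^ 2 * 2 ^ t) := by ring
  rw [card_product, card_degLTFinset, card_degLTFinset] at fibres
  refine hv.trans ?_
  gcongr
  rw [div_mul_eq_mul_div, le_div_iff₀ (by positivity)]
  exact_mod_cast fibres

end SignCosets

/-! ### Binomial sums -/

section BinomialSums

variable {m n r d t : ℕ} {δ : ℝ}

lemma binomLt_succ_pos (m r : ℕ) : 0 < binomLt m (r + 1) := by
  rw [binomLt, sum_range_succ']
  simp

lemma le_binomLt (hr : 1 ≤ r) : m ≤ binomLt m (r + 1) := by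
  calc m = m.choose 1 := m.choose_one_right.symm
    _ ≤ binomLt m (r + 1) :=
      single_le_sum (f := m.choose) (fun _ _ => Nat.zero_le _) (mem_range.mpr (by omega))

lemma one_sub_mul_binomLt_succ_le (hr : (r : ℝ) ≤ δ * (n + 1)) :
    (1 - δ) * binomLt (n + 1) (r + 1) ≤ binomLt n (r + 1) := by
  unfold binomLt
  push_cast
  rw [mul_sum]
  refine sum_le_sum fun i hi => ?_
  rcases le_or_gt i (n + 1) with hin | hin
  · have absorption : (n.choose i : ℝ) * (n + 1) = (n + 1).choose i * (n + 1 - i) := by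
      have := Nat.choose_mul_succ_eq n i
      rw [← Nat.cast_inj (R := ℝ)] at this
      push_cast [Nat.cast_sub hin] at this
      exact this
    have hir : (i : ℝ) ≤ r := by exact_mod_cast Nat.lt_succ_iff.mp (mem_range.mp hi)
    have := Nat.cast_nonneg (α := ℝ) ((n + 1).choose i)
    refine le_of_mul_le_mul_right ?_ (by positivity : (0 : ℝ) < n + 1)
    rw [absorption]
    nlinarith
  · rw [Nat.choose_eq_zero_of_lt hin]
    simp

lemma one_sub_pow_mul_binomLt_le (hδ0 : 0 ≤ δ) (hδ : δ ≤ 1) (hr : 2 * r ≤ δ * m)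
    (ht : 2 * t ≤ m) :
    (1 - δ) ^ t * binomLt m (r + 1) ≤ binomLt (m - t) (r + 1) := by
  induction t with
  | zero => simp
  | succ t ih =>
    obtain ⟨n, hn⟩ : ∃ n, m - t = n + 1 := ⟨m - t - 1, by omega⟩
    have half_le : (m : ℝ) ≤ 2 * (n + 1) := by exact_mod_cast (by omega : m ≤ 2 * (n + 1))
    have succ_step : (1 - δ) * binomLt (n + 1) (r + 1) ≤ binomLt n (r + 1) :=
      one_sub_mul_binomLt_succ_le (by nlinarith)
    rw [show m - (t + 1) = n by omega, pow_succ', mul_assoc]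
    have := hn ▸ ih (by omega)
    exact (mul_le_mul_of_nonneg_left this (by linarith)).trans succ_step

lemma choose_le_mul_choose_succ {i : ℕ} (hδ : δ ≤ 1) (hi : 2 * ((i : ℝ) + 1) ≤ δ * m) :
    (m.choose i : ℝ) ≤ δ * m.choose (i + 1) := by
  have hm : (0 : ℝ) ≤ m := Nat.cast_nonneg m
  have two_mul_le : 2 * ((i : ℝ) + 1) ≤ m := hi.trans (mul_le_of_le_one_left hm hδ)
  have him : i ≤ m := by exact_mod_cast (by linarith : (i : ℝ) ≤ m)
  have absorption := Nat.choose_succ_right_eq m i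
  rw [← Nat.cast_inj (R := ℝ)] at absorption
  push_cast [Nat.cast_sub him] at absorption
  have := Nat.cast_nonneg (α := ℝ) (m.choose i)
  have := Nat.cast_nonneg (α := ℝ) (m.choose (i + 1))
  refine le_of_mul_le_mul_right ?_ (by linarith : (0 : ℝ) < m / 2)
  nlinarith

lemma binomLt_le_mul_binomLt_succ (hδ0 : 0 ≤ δ) (hδ : δ ≤ 1) (hd : 2 * d ≤ δ * m) :
    (binomLt m d : ℝ) ≤ δ * binomLt m (d + 1) := by
  have termwise : ∀ i ∈ range d, (m.choose i : ℝ) ≤ δ * m.choose (i + 1) := fun i hi => by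
    have : (i : ℝ) + 1 ≤ d := by exact_mod_cast mem_range.mp hi
    exact choose_le_mul_choose_succ hδ (by linarith)
  unfold binomLt
  rw [sum_range_succ']
  push_cast
  rw [mul_add, mul_sum]
  exact (sum_le_sum termwise).trans (le_add_of_nonneg_right (by positivity))

lemma binomLt_sub_le (hδ0 : 0 ≤ δ) (hδ : δ ≤ 1) (hr : 2 * r ≤ δ * m) (k : ℕ) :
    (binomLt m (r + 1 - k) : ℝ) ≤ δ ^ k * binomLt m (r + 1) := by
  induction k with
  | zero => simp
  | succ k ih =>
    rcases Nat.eq_zero_or_pos (r + 1 - k) with h | h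
    · rw [show r + 1 - (k + 1) = 0 by omega]
      simp only [binomLt, range_zero, sum_empty, Nat.cast_zero]
      positivity
    · obtain ⟨d, hd⟩ : ∃ d, r + 1 - k = d + 1 := ⟨r - k, by omega⟩
      have hdr : (d : ℝ) ≤ r := by exact_mod_cast (by omega : d ≤ r)
      rw [hd] at ih
      rw [show r + 1 - (k + 1) = d by omega, pow_succ', mul_assoc]
      exact (binomLt_le_mul_binomLt_succ hδ0 hδ (by linarith)).trans (by gcongr)

lemma binomLt_mul_pow_le (hr : r ≤ m) {x : ℝ} (hx : 0 < x) (hx1 : x ≤ 1) :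
    (binomLt m (r + 1) : ℝ) * x ^ r ≤ (1 + x) ^ m := by
  rw [add_comm 1 x, add_pow, binomLt]
  push_cast
  rw [sum_mul]
  calc ∑ i ∈ range (r + 1), (m.choose i : ℝ) * x ^ r
      ≤ ∑ i ∈ range (r + 1), x ^ i * 1 ^ (m - i) * m.choose i := by
        refine sum_le_sum fun i hi => ?_
        rw [one_pow, mul_one, mul_comm]
        gcongr ?_ * _
        exact pow_le_pow_of_le_one hx.le hx1 (Nat.lt_succ_iff.mp (mem_range.mp hi))
    _ ≤ _ := sum_le_sum_of_subset_of_nonneg (range_mono (by omega)) fun i _ _ => by positivity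

lemma binomLt_pow_ten_le (hr : 1000 * r ≤ m) : (binomLt m (r + 1) : ℝ) ^ 10 ≤ 2 ^ m := by
  have generating := binomLt_mul_pow_le (m := m) (r := r) (by omega) (x := 1 / 32) (by norm_num)
    (by norm_num)
  have binomLt_le : (binomLt m (r + 1) : ℝ) ≤ (1 + 1 / 32) ^ m * 32 ^ r := by
    rw [one_div, inv_pow, ← one_div, mul_one_div, div_le_iff₀ (by positivity)] at generating
    simpa using generating
  calc (binomLt m (r + 1) : ℝ) ^ 10 ≤ ((1 + 1 / 32) ^ m * 32 ^ r) ^ 10 := by gcongr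
    _ = ((1 + 1 / 32) ^ 10) ^ m * (2 ^ 50) ^ r := by
      rw [mul_pow, ← pow_mul, ← pow_mul, ← pow_mul, ← pow_mul, mul_comm m, mul_comm r, pow_mul 32]
      norm_num [pow_mul]
    _ ≤ (3 / 2) ^ m * ((4 / 3) ^ 1000) ^ r := by
      gcongr
      · norm_num
      · calc (2 : ℝ) ^ 50 ≤ ((4 / 3) ^ 20) ^ 50 := by gcongr; norm_num
          _ = (4 / 3) ^ 1000 := by rw [← pow_mul]
    _ ≤ (3 / 2) ^ m * (4 / 3) ^ m := by
      rw [← pow_mul]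
      gcongr
      norm_num
    _ = 2 ^ m := by rw [← mul_pow]; norm_num

end BinomialSums

/-! ### The weight distribution -/

section WeightDistribution

variable {m r l t : ℕ}

lemma two_pow_eq_exp (n : ℕ) : (2 : ℝ) ^ n = Real.exp (Real.log 2 * n) := by
  rw [mul_comm, Real.exp_nat_mul, Real.exp_log two_pos]

lemma card_lightFinset_biased_le {δ β s : ℝ} (hδ0 : 0 ≤ δ) (hδ : δ ≤ 1) (hr : 2 * r ≤ δ * m)
    (ht : 2 * t ≤ m) (hβ : 0 < β) (hs : 0 < s) (hs1 : s ≤ 1) (hst : 4 / (β ^ 2 * 2 ^ t) = s ^ 2) :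
    (#(lightFinset m (r + 1) ((1 - β) / 2)) : ℝ)
      ≤ 4 * 2 ^ binomLt m (r + 1)
        * Real.exp ((3 * s - Real.log 2 * (1 - δ) ^ t) * binomLt m (r + 1)) := by
  have coset_bound := card_lightFinset_le_coset m (r + 1) t hβ
  rw [hst] at coset_bound
  have ball_bound := card_lightFinset_sq_le m (r + 1) hs hs1
  have restriction_bound := one_sub_pow_mul_binomLt_le hδ0 hδ hr ht
  have := Real.log_pos one_lt_two
  set N : ℝ := (binomLt m (r + 1) : ℝ)
  have inv_bound : ((2 : ℝ) ^ binomLt (m - t) (r + 1))⁻¹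
      ≤ Real.exp (-(Real.log 2 * ((1 - δ) ^ t * N))) := by
    rw [two_pow_eq_exp, ← Real.exp_neg]
    refine Real.exp_le_exp.mpr (neg_le_neg ?_)
    gcongr
  calc _ ≤ _ := coset_bound
    _ ≤ 2 * (2 ^ binomLt m (r + 1) * Real.exp (-(Real.log 2 * ((1 - δ) ^ t * N)))
          * (2 * Real.exp (3 * s * N))) := by
      rw [div_eq_mul_inv]
      gcongr
    _ = 4 * 2 ^ binomLt m (r + 1)
          * (Real.exp (3 * s * N) * Real.exp (-(Real.log 2 * ((1 - δ) ^ t * N)))) := by ring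
    _ = _ := by rw [← Real.exp_add]; ring_nf

lemma two_mul_le_of_mul_le (hr : 32768 * r ≤ m) : 2 * (r : ℝ) ≤ 1 / 16384 * m := by
  have : (32768 : ℝ) * r ≤ m := by exact_mod_cast hr
  linarith

lemma card_lightFinset_three_eighths_mul_le (hr : 32768 * r ≤ m) (hm : 60 ≤ m) :
    #(lightFinset m (r + 1) (3 / 8)) * (15 / 8) ^ binomLt m (r + 1)
      ≤ 2 ^ binomLt m (r + 1) * (4 * Real.exp (-(binomLt m (r + 1) / 32))) := by
  have biased_bound := card_lightFinset_biased_le (t := 30) (β := 1 / 4) (s := 1 / 4096)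
    (by norm_num) (by norm_num) (two_mul_le_of_mul_le hr) (by omega) (by norm_num) (by norm_num)
    (by norm_num) (by norm_num)
  have pow_le : (15 / 8 : ℝ) ^ binomLt m (r + 1)
      ≤ Real.exp ((Real.log 2 - 1 / 16) * binomLt m (r + 1)) := by
    rw [mul_comm, Real.exp_nat_mul]
    gcongr
    rw [sub_eq_add_neg, Real.exp_add, Real.exp_log two_pos]
    linarith [Real.add_one_le_exp (-(1 / 16) : ℝ)]
  have exponent_le : 3 * (1 / 4096) - Real.log 2 * (1 - 1 / 16384) ^ 30 + (Real.log 2 - 1 / 16)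
      ≤ -(1 / 32) := by
    have : (63 / 64 : ℝ) ≤ (1 - 1 / 16384) ^ 30 := by norm_num
    nlinarith [Real.log_two_lt_d9, Real.log_two_gt_d9]
  rw [show (3 / 8 : ℝ) = (1 - 1 / 4) / 2 by norm_num]
  calc _ ≤ _ := mul_le_mul biased_bound pow_le (by positivity) (by positivity)
    _ = 2 ^ binomLt m (r + 1) * (4 * Real.exp ((3 * (1 / 4096)
          - Real.log 2 * (1 - 1 / 16384) ^ 30 + (Real.log 2 - 1 / 16)) * binomLt m (r + 1))) := by
      rw [add_mul, Real.exp_add]; ring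
    _ ≤ 2 ^ binomLt m (r + 1) * (4 * Real.exp (-(1 / 32) * binomLt m (r + 1))) := by gcongr
    _ = _ := by ring_nf

lemma bias_exponent_le (hl : 2 ≤ l) :
    3 * (1 / 2) ^ (l + 8) - Real.log 2 * (1 - 1 / 16384) ^ (4 * l + 20) + (1 / 2) ^ l
      ≤ -(3 / 10 * (15 / 16) ^ l) := by
  have shrink : 69 / 100 * (9 / 10 * (15 / 16) ^ l)
      ≤ Real.log 2 * (1 - 1 / 16384) ^ (4 * l + 20) := by
    have fourth : (15 / 16 : ℝ) ≤ (1 - 1 / 16384) ^ 4 := by norm_num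
    have twentieth : (9 / 10 : ℝ) ≤ (1 - 1 / 16384) ^ 20 := by norm_num
    rw [pow_add, pow_mul, mul_comm (((1 - 1 / 16384) ^ 4 : ℝ) ^ l)]
    gcongr
    linarith [Real.log_two_gt_d9]
  have half_pow_le : (1 / 2 : ℝ) ^ l ≤ (8 / 15) ^ 2 * (15 / 16) ^ l := by
    calc (1 / 2 : ℝ) ^ l = (8 / 15) ^ l * (15 / 16) ^ l := by rw [← mul_pow]; norm_num
      _ ≤ _ := by
        gcongr ?_ * _
        exact pow_le_pow_of_le_one (by norm_num) (by norm_num) hl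
  have : (0 : ℝ) < (15 / 16) ^ l := by positivity
  rw [pow_add]
  linarith

/-- `t = 4 * l + 20` directions amplify the bias `2⁻ˡ⁻¹` to a weight with square root `2⁻ˡ⁻⁸`, at
the cost of shrinking the dimension by a factor close to `1`. -/
lemma card_lightFinset_bias_mul_le (hr : 32768 * r ≤ m) (hl : 2 ≤ l) (hm : 2 * (4 * l + 20) ≤ m) :
    #(lightFinset m (r + 1) ((1 - (1 / 2) ^ (l + 1)) / 2))
        * Real.exp ((1 / 2) ^ l * binomLt m (r + 1))
      ≤ 2 ^ binomLt m (r + 1)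
        * (4 * Real.exp (-(3 / 10 * ((15 / 16) ^ l * binomLt m (r + 1))))) := by
  have biased_bound := card_lightFinset_biased_le (t := 4 * l + 20) (β := (1 / 2) ^ (l + 1))
    (s := (1 / 2) ^ (l + 8)) (by norm_num) (by norm_num) (two_mul_le_of_mul_le hr) hm
    (by positivity) (by positivity) (pow_le_one₀ (by norm_num) (by norm_num)) (by
      simp only [one_div, inv_pow]
      rw [div_eq_iff (by positivity), pow_add 2 (4 * l) 20, pow_add 2 l 1, pow_add 2 l 8,
        mul_comm 4 l, pow_mul]
      field_simp
      norm_num)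
  calc _ ≤ _ := mul_le_mul_of_nonneg_right biased_bound (Real.exp_nonneg _)
    _ = 2 ^ binomLt m (r + 1) * (4 * Real.exp ((3 * (1 / 2) ^ (l + 8)
          - Real.log 2 * (1 - 1 / 16384) ^ (4 * l + 20) + (1 / 2) ^ l) * binomLt m (r + 1))) := by
      rw [add_mul, Real.exp_add]; ring
    _ ≤ 2 ^ binomLt m (r + 1) * (4 * Real.exp (-(3 / 10 * (15 / 16) ^ l) * binomLt m (r + 1))) := by
      gcongr
      exact bias_exponent_le hl
    _ = _ := by ring_nf

lemma pow_add_pow_le_quarter_pow_div (k : ℕ) (hk : k ≠ 0) :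
    (48 * (1 / 16384) ^ k + 3 * (2 * (1 / 4096) ^ k) : ℝ) ≤ (1 / 4) ^ (k + 1) / 8 := by
  have factor {a : ℝ} (ha : 0 ≤ a) (ha1 : a ≤ 1) : (a * (1 / 4)) ^ k ≤ a * (1 / 4) ^ k := by
    rw [mul_pow]
    gcongr
    exact pow_le_of_le_one ha ha1 hk
  have first : (1 / 16384 : ℝ) ^ k ≤ 1 / 4096 * (1 / 4) ^ k := by
    rw [show (1 / 16384 : ℝ) = 1 / 4096 * (1 / 4) by norm_num]
    exact factor (by norm_num) (by norm_num)
  have second : (1 / 4096 : ℝ) ^ k ≤ 1 / 1024 * (1 / 4) ^ k := by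
    rw [show (1 / 4096 : ℝ) = 1 / 1024 * (1 / 4) by norm_num]
    exact factor (by norm_num) (by norm_num)
  have : (0 : ℝ) < (1 / 4) ^ k := by positivity
  rw [pow_succ]
  linarith

/-- With `l - 1` derivatives and `48` samples the error weight has square root `2 * 4096⁻ˡ⁺¹`,
while the derivatives themselves lie in a space of dimension smaller by a factor `16384⁻ˡ⁺¹`. -/
lemma card_lightFinset_quarter_pow_le (hr : 32768 * r ≤ m) (hl : 2 ≤ l) :
    #(lightFinset m (r + 1) ((1 / 4) ^ l))
      ≤ 4 * Real.exp ((1 / 4) ^ l / 8 * binomLt m (r + 1)) := by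
  obtain ⟨k, rfl⟩ : ∃ k, l = k + 1 := ⟨l - 1, by omega⟩
  have hk : k ≠ 0 := by omega
  have deriv_bound := card_lightFinset_le_deriv m (r + 1) k 24 (w := (1 / 4) ^ (k + 1))
    (by positivity)
  have error_eq : 4 * (4 * ((2 : ℝ) ^ k * (1 / 4) ^ (k + 1))) ^ 24 = (2 * (1 / 4096) ^ k) ^ 2 := by
    have : 4 * ((2 : ℝ) ^ k * (1 / 4) ^ (k + 1)) = (1 / 2) ^ k := by
      rw [show (1 / 2 : ℝ) = 2 * (1 / 4) by norm_num, mul_pow]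
      ring
    rw [this, mul_pow, ← pow_mul, ← pow_mul, mul_comm k 24, mul_comm k 2, pow_mul, pow_mul]
    norm_num
  rw [error_eq] at deriv_bound
  have ball_bound := card_lightFinset_sq_le m (r + 1) (s := 2 * (1 / 4096) ^ k) (by positivity)
    (by linarith [pow_le_of_le_one (a := (1 / 4096 : ℝ)) (by norm_num) (by norm_num) hk])
  have degree_bound := binomLt_sub_le (by norm_num) (by norm_num) (two_mul_le_of_mul_le hr) k
  set N : ℝ := (binomLt m (r + 1) : ℝ)
  have deriv_count : (2 : ℝ) ^ (2 * 24 * binomLt m (r + 1 - k))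
      ≤ Real.exp (48 * ((1 / 16384) ^ k * N)) := by
    rw [two_pow_eq_exp]
    refine Real.exp_le_exp.mpr ?_
    push_cast
    nlinarith [Real.log_two_lt_d9, Nat.cast_nonneg (α := ℝ) (binomLt m (r + 1 - k))]
  calc _ ≤ _ := deriv_bound
    _ ≤ 2 * (Real.exp (48 * ((1 / 16384) ^ k * N))
          * (2 * Real.exp (3 * (2 * (1 / 4096) ^ k) * N))) := by gcongr
    _ = 4 * Real.exp ((48 * (1 / 16384) ^ k + 3 * (2 * (1 / 4096) ^ k)) * N) := by
      rw [add_mul, Real.exp_add]; ring_nf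
    _ ≤ _ := by gcongr; exact pow_add_pow_le_quarter_pow_div k hk

lemma card_lightFinset_quarter_pow_mul_le (hr : 32768 * r ≤ m) (hl : 2 ≤ l) :
    #(lightFinset m (r + 1) ((1 / 4) ^ l)) * (2 * (1 - (1 / 4) ^ (l + 1))) ^ binomLt m (r + 1)
      ≤ 2 ^ binomLt m (r + 1) * (4 * Real.exp (-((1 / 4) ^ l / 8 * binomLt m (r + 1)))) := by
  have nonneg : 0 ≤ 1 - (1 / 4 : ℝ) ^ (l + 1) :=
    sub_nonneg.mpr (pow_le_one₀ (by norm_num) (by norm_num))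
  have pow_le : (1 - (1 / 4 : ℝ) ^ (l + 1)) ^ binomLt m (r + 1)
      ≤ Real.exp (-(1 / 4) ^ (l + 1) * binomLt m (r + 1)) := by
    rw [mul_comm, Real.exp_nat_mul]
    exact pow_le_pow_left₀ nonneg (Real.one_sub_le_exp_neg _) _
  rw [mul_pow]
  calc _ ≤ 4 * Real.exp ((1 / 4) ^ l / 8 * binomLt m (r + 1))
        * (2 ^ binomLt m (r + 1) * Real.exp (-(1 / 4) ^ (l + 1) * binomLt m (r + 1))) :=
      mul_le_mul (card_lightFinset_quarter_pow_le hr hl) (by gcongr)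
        (mul_nonneg (by positivity) (pow_nonneg nonneg _)) (by positivity)
    _ = 2 ^ binomLt m (r + 1) * (4 * (Real.exp ((1 / 4) ^ l / 8 * binomLt m (r + 1))
        * Real.exp (-(1 / 4) ^ (l + 1) * binomLt m (r + 1)))) := by ring
    _ = _ := by rw [← Real.exp_add]; ring_nf

lemma card_lightFinset_quarter_pow_mul_two_pow_le {d n K : ℕ} {ε : ℝ} (hε : 0 ≤ ε)
    (hn : (1 / 2) ^ n ≤ ε / 12) (hK : (K : ℝ) ≤ (1 - ε) * binomLt m d) :
    #(lightFinset m d ((1 / 4) ^ n)) * (2 : ℝ) ^ K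
      ≤ 2 ^ binomLt m d * (2 * Real.exp (-(ε / 4 * binomLt m d))) := by
  have ball_bound := card_lightFinset_sq_le m d (s := (1 / 2) ^ n) (by positivity)
    (pow_le_one₀ (by norm_num) (by norm_num))
  rw [← pow_mul, mul_comm n, pow_mul, show (1 / 2 : ℝ) ^ 2 = 1 / 4 by norm_num] at ball_bound
  set N : ℝ := (binomLt m d : ℝ)
  have exponent_le : 3 * (1 / 2) ^ n * N + Real.log 2 * K ≤ Real.log 2 * N - ε / 4 * N := by
    have hN0 : 0 ≤ N := Nat.cast_nonneg _
    have log_le : Real.log 2 * K ≤ Real.log 2 * ((1 - ε) * N) := by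
      have := Real.log_pos one_lt_two
      gcongr
    nlinarith [mul_le_mul_of_nonneg_right hn hN0,
      mul_le_mul_of_nonneg_right Real.log_two_gt_d9.le (mul_nonneg hε hN0), mul_nonneg hε hN0]
  calc _ ≤ 2 * Real.exp (3 * (1 / 2) ^ n * N) * 2 ^ K := by gcongr
    _ = 2 * Real.exp (3 * (1 / 2) ^ n * N + Real.log 2 * K) := by
      rw [two_pow_eq_exp, Real.exp_add]; ring
    _ ≤ 2 * Real.exp (Real.log 2 * N - ε / 4 * N) := by gcongr
    _ = _ := by rw [sub_eq_add_neg, Real.exp_add, ← two_pow_eq_exp]; ring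

end WeightDistribution

/-! ### The moment of the number of zeros -/

section Moment

variable {m d r a n K : ℕ} {s : Set ℝ}

/-- The part of the `K`-th moment of `2 * (1 - relWeight f)`, summed over the functions `f` of
degree less than `d`, that comes from the functions whose relative weight lies in `s`. -/
noncomputable def moment (m d K : ℕ) (s : Set ℝ) : ℝ :=
  open Classical in ∑ f ∈ degLTFinset m d with relWeight f ∈ s, (2 * (1 - relWeight f)) ^ K

lemma two_mul_one_sub_relWeight_nonneg {α : Type*} [Fintype α] (f : α → ZMod 2) :
    0 ≤ 2 * (1 - relWeight f) := by
  linarith [relWeight_le_one f]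

lemma moment_univ (m d K : ℕ) :
    moment m d K Set.univ = ∑ f ∈ degLTFinset m d, (2 * (1 - relWeight f)) ^ K := by
  simp only [moment, Set.mem_univ, filter_true]

lemma moment_le_add {t u : Set ℝ} (h : s ⊆ t ∪ u) :
    moment m d K s ≤ moment m d K t + moment m d K u := by
  classical
  simp only [moment, sum_filter, ← sum_add_distrib]
  gcongr with f
  have := pow_nonneg (two_mul_one_sub_relWeight_nonneg f) K
  have := @h (relWeight f)
  split_ifs <;> simp_all

lemma moment_le_sum {ι : Type*} {J : Finset ι} {θ B : ι → ℝ} (hB : ∀ j ∈ J, 0 ≤ B j)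
    (cover : ∀ w ∈ s, 0 ≤ w → w ≤ 1 → ∃ j ∈ J, w ≤ θ j ∧ (2 * (1 - w)) ^ K ≤ B j) :
    moment m d K s ≤ ∑ j ∈ J, #(lightFinset m d (θ j)) * B j := by
  classical
  have pointwise (f : (Fin m → ZMod 2) → ZMod 2) (hf : relWeight f ∈ s) :
      (2 * (1 - relWeight f)) ^ K ≤ ∑ j ∈ J, if relWeight f ≤ θ j then B j else 0 := by
    obtain ⟨j, hj, light, le⟩ := cover _ hf (relWeight_nonneg f) (relWeight_le_one f)
    calc _ ≤ if relWeight f ≤ θ j then B j else 0 := by rwa [if_pos light]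
      _ ≤ _ := single_le_sum (f := fun j => if relWeight f ≤ θ j then B j else 0)
        (fun i hi => ite_nonneg (hB i hi) le_rfl) hj
  calc moment m d K s
      ≤ ∑ f ∈ degLTFinset m d with relWeight f ∈ s,
          ∑ j ∈ J, if relWeight f ≤ θ j then B j else 0 :=
      sum_le_sum fun f hf => pointwise f (mem_filter.mp hf).2
    _ ≤ ∑ f ∈ degLTFinset m d, ∑ j ∈ J, if relWeight f ≤ θ j then B j else 0 :=
      sum_le_sum_of_subset_of_nonneg (filter_subset _ _) fun f _ _ =>
        sum_nonneg fun j hj => ite_nonneg (hB j hj) le_rfl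
    _ = ∑ j ∈ J, #(lightFinset m d (θ j)) * B j := by
      rw [sum_comm]
      exact sum_congr rfl fun j _ => by rw [← sum_filter, sum_const, nsmul_eq_mul, lightFinset]

lemma moment_le_mul {θ B : ℝ} (hB : 0 ≤ B)
    (cover : ∀ w ∈ s, 0 ≤ w → w ≤ 1 → w ≤ θ ∧ (2 * (1 - w)) ^ K ≤ B) :
    moment m d K s ≤ #(lightFinset m d θ) * B := by
  simpa using moment_le_sum (J := {()}) (θ := fun _ => θ) (B := fun _ => B) (fun _ _ => hB)
    fun w hw h0 h1 => ⟨(), mem_singleton_self _, cover w hw h0 h1⟩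

lemma two_mul_one_sub_pow_le_exp {N : ℕ} {w b : ℝ} (hK : K ≤ N) (hw : w ≤ 1) (hb : 0 ≤ b)
    (h : 1 - 2 * w ≤ b) : (2 * (1 - w)) ^ K ≤ Real.exp (b * N) :=
  calc (2 * (1 - w)) ^ K ≤ Real.exp b ^ K :=
        pow_le_pow_left₀ (by linarith) (by linarith [Real.add_one_le_exp b]) K
    _ ≤ Real.exp b ^ N := pow_le_pow_right₀ (Real.one_le_exp hb) hK
    _ = Real.exp (b * N) := by rw [mul_comm, Real.exp_nat_mul]

lemma two_mul_one_sub_pow_le_pow {N : ℕ} {w b : ℝ} (hK : K ≤ N) (hw : w ≤ 1) (hb : 1 ≤ b)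
    (h : 2 * (1 - w) ≤ b) : (2 * (1 - w)) ^ K ≤ b ^ N :=
  (pow_le_pow_left₀ (by linarith) h K).trans (pow_le_pow_right₀ hb hK)

lemma moment_Iic_quarter_pow_le {ε : ℝ} (hε : 0 ≤ ε) (hn : (1 / 2) ^ n ≤ ε / 12)
    (hK : (K : ℝ) ≤ (1 - ε) * binomLt m d) :
    moment m d K (Set.Iic ((1 / 4) ^ n))
      ≤ 2 ^ binomLt m d * (2 * Real.exp (-(ε / 4 * binomLt m d))) :=
  (moment_le_mul (by positivity) fun w hw h0 h1 =>
    ⟨hw, pow_le_pow_left₀ (by linarith) (by linarith) K⟩).trans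
    (card_lightFinset_quarter_pow_mul_two_pow_le hε hn hK)

lemma exists_mem_Ico_quarter_pow {w : ℝ} (hw : w ∈ Set.Ioc ((1 / 4 : ℝ) ^ n) ((1 / 4) ^ 2)) :
    ∃ l ∈ Ico 2 n, w ≤ (1 / 4) ^ l ∧ (1 / 4) ^ (l + 1) ≤ w := by
  obtain ⟨l, lower, upper⟩ := exists_nat_pow_near_of_lt_one
    ((by positivity : (0 : ℝ) < (1 / 4) ^ n).trans hw.1) (by linarith [hw.2])
    (by norm_num : (0 : ℝ) < 1 / 4) (by norm_num)
  have lt_of_pow_lt {i j : ℕ} (h : (1 / 4 : ℝ) ^ j < (1 / 4) ^ i) : i < j :=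
    (pow_lt_pow_iff_right_of_lt_one₀ (by norm_num) (by norm_num)).mp h
  exact ⟨l, mem_Ico.mpr ⟨Nat.le_of_lt_succ (lt_of_pow_lt (lower.trans_le hw.2)),
    lt_of_pow_lt (hw.1.trans_le upper)⟩, upper, lower.le⟩

lemma moment_Ioc_quarter_pow_le (n : ℕ) (hr : 32768 * r ≤ m) (hK : K ≤ binomLt m (r + 1)) :
    moment m (r + 1) K (Set.Ioc ((1 / 4) ^ n) ((1 / 4) ^ 2))
      ≤ 2 ^ binomLt m (r + 1)
        * ∑ l ∈ Ico 2 n, 4 * Real.exp (-((1 / 4) ^ l / 8 * binomLt m (r + 1))) := by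
  have base_ge {l : ℕ} (hl : 2 ≤ l) : (1 : ℝ) ≤ 2 * (1 - (1 / 4) ^ (l + 1)) := by
    have : (1 / 4 : ℝ) ^ (l + 1) ≤ (1 / 4) ^ 2 :=
      pow_le_pow_of_le_one (by norm_num) (by norm_num) (by omega)
    linarith
  calc _ ≤ ∑ l ∈ Ico 2 n, #(lightFinset m (r + 1) ((1 / 4) ^ l))
        * (2 * (1 - (1 / 4 : ℝ) ^ (l + 1))) ^ binomLt m (r + 1) := by
        refine moment_le_sum (fun l hl => pow_nonneg (zero_le_one.trans (base_ge
          (mem_Ico.mp hl).1)) _) fun w hw _ h1 => ?_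
        obtain ⟨l, hl, upper, lower⟩ := exists_mem_Ico_quarter_pow hw
        exact ⟨l, hl, upper, two_mul_one_sub_pow_le_pow hK h1 (base_ge (mem_Ico.mp hl).1)
          (by linarith)⟩
    _ ≤ _ := by
      rw [mul_sum]
      exact sum_le_sum fun l hl => card_lightFinset_quarter_pow_mul_le hr (mem_Ico.mp hl).1

lemma moment_Ioc_three_eighths_le (hr : 32768 * r ≤ m) (hm : 60 ≤ m)
    (hK : K ≤ binomLt m (r + 1)) :
    moment m (r + 1) K (Set.Ioc ((1 / 4) ^ 2) (3 / 8))
      ≤ 2 ^ binomLt m (r + 1) * (4 * Real.exp (-(binomLt m (r + 1) / 32))) :=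
  (moment_le_mul (by positivity) fun w hw _ h1 =>
    ⟨hw.2, two_mul_one_sub_pow_le_pow hK h1 (by norm_num) (by linarith [hw.1])⟩).trans
    (card_lightFinset_three_eighths_mul_le hr hm)

lemma exists_mem_Icc_half_pow {N : ℕ} {w : ℝ} (hN : 0 < N)
    (hw : w ∈ Set.Ioc (3 / 8) ((1 - (1 / 2 : ℝ) ^ a / N) / 2)) :
    ∃ l ∈ Icc 2 (Nat.log 2 (N * 2 ^ a)), w ≤ (1 - (1 / 2) ^ (l + 1)) / 2
      ∧ 1 - 2 * w ≤ (1 / 2) ^ l := by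
  have bias_ge : (1 / 2) ^ a / N ≤ 1 - 2 * w := by linarith [hw.2]
  have bias_lt : 1 - 2 * w < (1 / 2) ^ 2 := by linarith [hw.1]
  obtain ⟨l, lower, upper⟩ := exists_nat_pow_near_of_lt_one
    ((by positivity : (0 : ℝ) < (1 / 2) ^ a / N).trans_le bias_ge) (by linarith)
    (by norm_num : (0 : ℝ) < 1 / 2) (by norm_num)
  have two_lt : 2 < l + 1 :=
    (pow_lt_pow_iff_right_of_lt_one₀ (by norm_num) (by norm_num)).mp (lower.trans bias_lt)
  have two_pow_le : (2 : ℝ) ^ l ≤ N * 2 ^ a := by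
    have := bias_ge.trans upper
    rw [one_div, inv_pow, inv_pow, inv_eq_one_div, div_div, inv_eq_one_div,
      one_div_le_one_div (by positivity) (by positivity)] at this
    linarith
  exact ⟨l, mem_Icc.mpr ⟨Nat.le_of_lt_succ two_lt, Nat.le_log_of_pow_le one_lt_two
    (by exact_mod_cast two_pow_le)⟩, by linarith, upper⟩

lemma two_mul_le_of_two_pow_le {l : ℕ} (hr : 32768 * r ≤ m) (hm : 40 * a + 200 ≤ m)
    (hl : (2 : ℝ) ^ l ≤ binomLt m (r + 1) * 2 ^ a) : 2 * (4 * l + 20) ≤ m := by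
  have two_pow_le : (2 : ℝ) ^ (l * 10) ≤ 2 ^ (m + a * 10) :=
    calc (2 : ℝ) ^ (l * 10) = (2 ^ l) ^ 10 := pow_mul _ _ _
      _ ≤ (binomLt m (r + 1) * 2 ^ a) ^ 10 := by gcongr
      _ = (binomLt m (r + 1) : ℝ) ^ 10 * (2 ^ a) ^ 10 := mul_pow _ _ _
      _ ≤ 2 ^ m * (2 ^ a) ^ 10 := by
        gcongr
        exact binomLt_pow_ten_le (by omega)
      _ = 2 ^ (m + a * 10) := by rw [pow_add, pow_mul]
  have := (pow_le_pow_iff_right₀ (one_lt_two (α := ℝ))).mp two_pow_le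
  omega

lemma sqrt_div_two_pow_le {N : ℝ} {l : ℕ} (hN : 0 ≤ N) (hl : 2 ^ l ≤ N * 2 ^ a) :
    √(N / 2 ^ a) ≤ (15 / 16) ^ l * N := by
  have one_le : (1 : ℝ) ≤ ((15 / 16) ^ l) ^ 2 * 2 ^ l := by
    rw [← pow_mul, mul_comm l 2, pow_mul, ← mul_pow]
    exact one_le_pow₀ (by norm_num)
  rw [Real.sqrt_le_left (by positivity), div_le_iff₀ (by positivity)]
  calc N ≤ N * (((15 / 16) ^ l) ^ 2 * 2 ^ l) := le_mul_of_one_le_right hN one_le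
    _ ≤ N * (((15 / 16) ^ l) ^ 2 * (N * 2 ^ a)) := by gcongr
    _ = _ := by ring

lemma moment_Ioc_bias_le (hr : 32768 * r ≤ m) (hm : 40 * a + 200 ≤ m)
    (hK : K ≤ binomLt m (r + 1)) :
    moment m (r + 1) K (Set.Ioc (3 / 8) ((1 - (1 / 2) ^ a / binomLt m (r + 1)) / 2))
      ≤ 2 ^ binomLt m (r + 1) * (binomLt m (r + 1) * 2 ^ a
        * (4 * Real.exp (-(3 / 10 * √(binomLt m (r + 1) / 2 ^ a))))) := by
  set N := binomLt m (r + 1)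
  set L := Nat.log 2 (N * 2 ^ a)
  have N_pos : 0 < N := binomLt_succ_pos m r
  have two_pow_le {l : ℕ} (hl : l ≤ L) : (2 : ℝ) ^ l ≤ N * 2 ^ a := by
    exact_mod_cast Nat.pow_le_of_le_log (by positivity) hl
  calc _ ≤ ∑ l ∈ Icc 2 L, #(lightFinset m (r + 1) ((1 - (1 / 2) ^ (l + 1)) / 2))
        * Real.exp ((1 / 2) ^ l * N) := by
        refine moment_le_sum (fun _ _ => Real.exp_nonneg _) fun w hw _ h1 => ?_
        obtain ⟨l, hl, light, bias_le⟩ := exists_mem_Icc_half_pow N_pos hw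
        exact ⟨l, hl, light, two_mul_one_sub_pow_le_exp hK h1 (by positivity) bias_le⟩
    _ ≤ ∑ _l ∈ Icc 2 L, 2 ^ N * (4 * Real.exp (-(3 / 10 * √(N / 2 ^ a)))) := by
      refine sum_le_sum fun l hl => ?_
      obtain ⟨two_le, le_log⟩ := mem_Icc.mp hl
      refine (card_lightFinset_bias_mul_le hr two_le
        (two_mul_le_of_two_pow_le hr hm (two_pow_le le_log))).trans ?_
      gcongr
      exact sqrt_div_two_pow_le (Nat.cast_nonneg _) (two_pow_le le_log)
    _ ≤ (N * 2 ^ a) * (2 ^ N * (4 * Real.exp (-(3 / 10 * √(N / 2 ^ a))))) := by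
      rw [sum_const, nsmul_eq_mul, Nat.card_Icc]
      have : L ≤ N * 2 ^ a := Nat.log_le_self _ _
      gcongr
      exact_mod_cast (by omega : L + 1 - 2 ≤ N * 2 ^ a)
    _ = _ := by ring

lemma moment_Ioi_le (hd : 0 < binomLt m d) (hK : K ≤ binomLt m d) :
    moment m d K (Set.Ioi ((1 - (1 / 2) ^ a / binomLt m d) / 2))
      ≤ 2 ^ binomLt m d * Real.exp ((1 / 2) ^ a) := by
  have card_le : (#(lightFinset m d 1) : ℝ) ≤ 2 ^ binomLt m d := by
    exact_mod_cast (card_filter_le _ _).trans_eq (card_degLTFinset m d)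
  have exponent_eq : (1 / 2 : ℝ) ^ a = (1 / 2) ^ a / binomLt m d * binomLt m d := by
    field_simp
  calc _ ≤ #(lightFinset m d 1) * Real.exp ((1 / 2) ^ a) :=
        moment_le_mul (Real.exp_nonneg _) fun w hw _ h1 => ⟨h1, by
          rw [exponent_eq]
          exact two_mul_one_sub_pow_le_exp hK h1 (by positivity)
            (by linarith [Set.mem_Ioi.mp hw])⟩
    _ ≤ _ := by gcongr

/-- The upper bound on `moment m d K univ / 2 ^ N`, where `N` is the dimension of the space of
functions of degree less than `d`: the summands bound the contributions of the relative weights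
in `(c, 1]`, `(3/8, c]`, `(1/16, 3/8]`, `(4⁻ⁿ, 1/16]` and `[0, 4⁻ⁿ]`, where
`c = (1 - 2⁻ᵃ / N) / 2`. -/
noncomputable def momentBound (ε : ℝ) (a n N : ℕ) : ℝ :=
  Real.exp ((1 / 2) ^ a) + N * 2 ^ a * (4 * Real.exp (-(3 / 10 * √(N / 2 ^ a))))
    + 4 * Real.exp (-(N / 32)) + ∑ l ∈ Ico 2 n, 4 * Real.exp (-((1 / 4) ^ l / 8 * N))
    + 2 * Real.exp (-(ε / 4 * N))

theorem moment_univ_le {ε : ℝ} (hr : 32768 * r ≤ m) (hm : 40 * a + 200 ≤ m) (hε : 0 ≤ ε)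
    (hn : (1 / 2) ^ n ≤ ε / 12) (hK : (K : ℝ) ≤ (1 - ε) * binomLt m (r + 1)) :
    moment m (r + 1) K Set.univ
      ≤ 2 ^ binomLt m (r + 1) * momentBound ε a n (binomLt m (r + 1)) := by
  have K_le : K ≤ binomLt m (r + 1) := by
    exact_mod_cast hK.trans (mul_le_of_le_one_left (Nat.cast_nonneg _) (by linarith))
  have univ_le := moment_le_add (m := m) (d := r + 1) (K := K)
    (Set.Iic_union_Ioi (a := (1 - (1 / 2 : ℝ) ^ a / binomLt m (r + 1)) / 2)).ge
  have split (x y : ℝ) := moment_le_add (m := m) (d := r + 1) (K := K)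
    (Set.Iic_subset_Iic_union_Ioc (a := x) (b := y))
  have top := moment_Ioi_le (a := a) (binomLt_succ_pos m r) K_le
  have bias := moment_Ioc_bias_le hr hm K_le
  have middle := moment_Ioc_three_eighths_le hr (by omega) K_le
  have quarter := moment_Ioc_quarter_pow_le n hr K_le
  have bottom := moment_Iic_quarter_pow_le hε hn hK
  rw [momentBound]
  linarith [split (3 / 8) ((1 - (1 / 2 : ℝ) ^ a / binomLt m (r + 1)) / 2),
    split ((1 / 4) ^ 2) (3 / 8), split ((1 / 4) ^ n) ((1 / 4) ^ 2)]

end Moment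

section MomentBound

open Filter Topology

lemma tendsto_mul_exp_neg_sqrt (a : ℕ) :
    Tendsto (fun N : ℕ => (N : ℝ) * 2 ^ a * (4 * Real.exp (-(3 / 10 * √(N / 2 ^ a)))))
      atTop (𝓝 0) := by
  have exponent_tendsto : Tendsto (fun N : ℕ => 3 / 10 * √((N : ℝ) / 2 ^ a)) atTop atTop :=
    (Real.tendsto_sqrt_atTop.comp
      (tendsto_natCast_atTop_atTop.atTop_div_const (by positivity))).const_mul_atTop (by norm_num)
  have sq_mul_tendsto := ((Real.tendsto_pow_mul_exp_neg_atTop_nhds_zero 2).comp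
    exponent_tendsto).const_mul (400 / 9 * ((2 : ℝ) ^ a) ^ 2)
  rw [mul_zero] at sq_mul_tendsto
  refine sq_mul_tendsto.congr fun N => ?_
  simp only [Function.comp_apply]
  rw [mul_pow, Real.sq_sqrt (by positivity)]
  field_simp
  ring

lemma tendsto_mul_exp_neg_mul (b : ℝ) {c : ℝ} (hc : 0 < c) :
    Tendsto (fun N : ℕ => b * Real.exp (-(c * N))) atTop (𝓝 0) := by
  simpa using (Real.tendsto_exp_neg_atTop_nhds_zero.comp
    (tendsto_natCast_atTop_atTop.const_mul_atTop hc)).const_mul b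

lemma tendsto_momentBound {ε : ℝ} (hε : 0 < ε) (a n : ℕ) :
    Tendsto (momentBound ε a n) atTop (𝓝 (Real.exp ((1 / 2) ^ a))) := by
  have middle : Tendsto (fun N : ℕ => 4 * Real.exp (-((N : ℝ) / 32))) atTop (𝓝 0) := by
    simpa only [inv_mul_eq_div] using tendsto_mul_exp_neg_mul 4 (c := 32⁻¹) (by norm_num)
  have quarter : Tendsto (fun N : ℕ =>
      ∑ l ∈ Ico 2 n, 4 * Real.exp (-((1 / 4) ^ l / 8 * (N : ℝ)))) atTop (𝓝 0) := by
    simpa only [sum_const_zero] using tendsto_finsetSum (Ico 2 n) fun l _ =>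
      tendsto_mul_exp_neg_mul 4 (c := (1 / 4) ^ l / 8) (by positivity)
  have total := ((((tendsto_const_nhds (x := Real.exp ((1 / 2) ^ a))).add
    (tendsto_mul_exp_neg_sqrt a)).add middle).add quarter).add
    (tendsto_mul_exp_neg_mul 2 (by positivity : 0 < ε / 4))
  simp only [add_zero] at total
  exact total

lemma exists_forall_ge_momentBound_le {ε ρ : ℝ} (hε : 0 < ε) (hρ : 0 < ρ) :
    ∃ a n N₀ : ℕ, (1 / 2) ^ n ≤ ε / 12 ∧ ∀ N ≥ N₀, momentBound ε a n N ≤ 1 + ρ := by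
  obtain ⟨n, hn⟩ := exists_pow_lt_of_lt_one (by positivity : 0 < ε / 12)
    (by norm_num : (1 / 2 : ℝ) < 1)
  have exp_tendsto : Tendsto (fun a : ℕ => Real.exp ((1 / 2) ^ a)) atTop (𝓝 1) := by
    simpa only [Function.comp_def, Real.exp_zero] using (Real.continuous_exp.tendsto 0).comp
      (tendsto_pow_atTop_nhds_zero_of_lt_one (by norm_num) (by norm_num : (1 / 2 : ℝ) < 1))
  obtain ⟨a, ha⟩ := (exp_tendsto.eventually_lt_const (by linarith : 1 < 1 + ρ)).exists
  obtain ⟨N₀, hN₀⟩ :=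
    eventually_atTop.mp ((tendsto_momentBound hε a n).eventually_le_const ha)
  exact ⟨a, n, N₀, hn.le, hN₀⟩

end MomentBound

/-! ### Random sets of points -/

section VanishingSpace

lemma choose_mul_pow_le {n M : ℕ} (h : n ≤ M) (K : ℕ) :
    n.choose K * M ^ K ≤ M.choose K * n ^ K := by
  have descFactorial_le : n.descFactorial K * M ^ K ≤ M.descFactorial K * n ^ K := by
    induction K with
    | zero => simp
    | succ K ih =>
      have sub_mul_le : (n - K) * M ≤ (M - K) * n := by
        rw [Nat.sub_mul, Nat.sub_mul, mul_comm n M]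
        exact Nat.sub_le_sub_left (Nat.mul_le_mul_left K h) _
      rw [Nat.descFactorial_succ, Nat.descFactorial_succ, pow_succ, pow_succ]
      calc (n - K) * n.descFactorial K * (M ^ K * M)
          = (n - K) * M * (n.descFactorial K * M ^ K) := by ring
        _ ≤ (M - K) * n * (M.descFactorial K * n ^ K) := Nat.mul_le_mul sub_mul_le ih
        _ = _ := by ring
  rw [Nat.descFactorial_eq_factorial_mul_choose, Nat.descFactorial_eq_factorial_mul_choose,
    mul_assoc, mul_assoc] at descFactorial_le
  exact Nat.le_of_mul_le_mul_left descFactorial_le K.factorial_pos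

lemma choose_le_choose_mul_div_pow {n M : ℕ} (hM : 0 < M) (h : n ≤ M) (K : ℕ) :
    (n.choose K : ℝ) ≤ M.choose K * ((n : ℝ) / M) ^ K := by
  rw [div_pow, ← mul_div_assoc, le_div_iff₀ (by positivity)]
  exact_mod_cast choose_mul_pow_le h K

variable {m r K : ℕ}

lemma evalLin_eq_sum (c : RMcode m r) :
    (fun z => evalLin m r z c) = ∑ S, c S • monomialFun S.1 := by
  ext z
  simp [evalLin, monomialFun, mul_comm]

lemma evalLin_mem_degLTFinset (c : RMcode m r) :
    (fun z => evalLin m r z c) ∈ degLTFinset m (r + 1) := by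
  rw [mem_degLTFinset, evalLin_eq_sum]
  exact Submodule.sum_mem _ fun S _ =>
    Submodule.smul_mem _ _ (monomialFun_mem_degLT (Nat.lt_succ_of_le S.2))

lemma evalLin_injective :
    Function.Injective fun (c : RMcode m r) (z : Fin m → ZMod 2) => evalLin m r z c := by
  intro c c' h
  simp only [evalLin_eq_sum] at h
  exact ((linearIndependent_monomialFun m (r + 1)).comp
    (fun S : MonIdx m r => ⟨S.1, Nat.lt_succ_of_le S.2⟩)
    fun _ _ h => Subtype.ext (congrArg (·.1) h)).fintypeLinearCombination_injective h

lemma numZeros_div_two_pow (c : RMcode m r) :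
    (numZeros m r c : ℝ) / (2 ^ m : ℕ) = 1 - relWeight fun z => evalLin m r z c := by
  have := prob_add_prob_not fun z => evalLin m r z c = 0
  rw [prob_eq_card_div] at this
  simp only [Fintype.card_fun, ZMod.card, Fintype.card_fin] at this
  rw [numZeros, relWeight]
  linarith

lemma numZeros_le (c : RMcode m r) : numZeros m r c ≤ 2 ^ m :=
  (card_le_univ _).trans (by simp)

lemma sum_relWeight_evalLin_le_moment_univ (m r K : ℕ) :
    ∑ c : RMcode m r, (2 * (1 - relWeight fun z => evalLin m r z c)) ^ K
      ≤ moment m (r + 1) K Set.univ := by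
  classical
  rw [moment_univ]
  calc _ = ∑ f ∈ univ.image fun (c : RMcode m r) z => evalLin m r z c,
          (2 * (1 - relWeight f)) ^ K := by
        rw [sum_image fun c _ c' _ h => evalLin_injective h]
    _ ≤ _ := sum_le_sum_of_subset_of_nonneg
      (image_subset_iff.mpr fun c _ => evalLin_mem_degLTFinset c) fun f _ _ =>
        pow_nonneg (two_mul_one_sub_relWeight_nonneg f) K

lemma choose_numZeros_mul_two_pow_le (c : RMcode m r) (K : ℕ) :
    ((numZeros m r c).choose K : ℝ) * 2 ^ K
      ≤ (2 ^ m).choose K * (2 * (1 - relWeight fun z => evalLin m r z c)) ^ K := by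
  have := choose_le_choose_mul_div_pow (by positivity) (numZeros_le c) K
  rw [numZeros_div_two_pow] at this
  calc _ ≤ _ := mul_le_mul_of_nonneg_right this (by positivity)
    _ = _ := by rw [mul_pow]; ring

lemma sum_choose_numZeros_mul_two_pow_le (m r K : ℕ) :
    (∑ c : RMcode m r, ((numZeros m r c).choose K : ℝ)) * 2 ^ K
      ≤ (2 ^ m).choose K * moment m (r + 1) K Set.univ := by
  rw [sum_mul]
  refine (sum_le_sum fun c _ => choose_numZeros_mul_two_pow_le c K).trans ?_
  rw [← mul_sum]
  gcongr
  exact sum_relWeight_evalLin_le_moment_univ m r K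

lemma mem_vanishing {Z : Set (Fin m → ZMod 2)} {c : RMcode m r} :
    c ∈ vanishing m r Z ↔ ∀ z ∈ Z, evalLin m r z c = 0 := by
  simp [vanishing]

lemma card_monIdx (m r : ℕ) : Fintype.card (MonIdx m r) = binomLe m r :=
  (Fintype.card_congr (Equiv.subtypeEquivRight fun _ => Nat.lt_succ_iff.symm)).trans
    (card_subtype_card_lt m (r + 1))

lemma binomLe_sub_card_le_finrank_vanishing (Z : Finset (Fin m → ZMod 2)) :
    binomLe m r - #Z ≤ Module.finrank (ZMod 2) (vanishing m r (Z : Set _)) := by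
  let restrict : RMcode m r →ₗ[ZMod 2] (Z → ZMod 2) := LinearMap.pi fun z => evalLin m r z.1
  have ker_eq : LinearMap.ker restrict = vanishing m r (Z : Set _) := by
    ext c
    simp [restrict, mem_vanishing, funext_iff]
  have rank_nullity := restrict.finrank_range_add_finrank_ker
  have rank_le := (LinearMap.range restrict).finrank_le
  rw [ker_eq] at rank_nullity
  simp only [Module.finrank_fintype_fun_eq_card, card_monIdx, Fintype.card_coe]
    at rank_nullity rank_le
  omega

lemma two_pow_finrank_vanishing (Z : Finset (Fin m → ZMod 2)) :
    2 ^ Module.finrank (ZMod 2) (vanishing m r (Z : Set _))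
      = #{c : RMcode m r | ∀ z ∈ Z, evalLin m r z c = 0} := by
  classical
  have := Module.card_eq_pow_finrank (K := ZMod 2) (V := vanishing m r (Z : Set _))
  rw [ZMod.card] at this
  rw [← this, Fintype.card_subtype]
  simp [mem_vanishing]

lemma sum_two_pow_finrank_vanishing (m r K : ℕ) :
    ∑ Z ∈ powersetCard K (univ : Finset (Fin m → ZMod 2)),
        2 ^ Module.finrank (ZMod 2) (vanishing m r (Z : Set _))
      = ∑ c : RMcode m r, (numZeros m r c).choose K := by
  simp only [two_pow_finrank_vanishing, card_filter]
  rw [sum_comm]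
  refine sum_congr rfl fun c _ => ?_
  rw [← card_filter, numZeros, ← card_powersetCard]
  congr 1
  ext Z
  simp [mem_powersetCard, subset_iff, and_comm]

/-- Markov's inequality for `2 ^ (v - d) - 1`, which is at least `1` as soon as `v ≠ d`. -/
lemma one_sub_mul_card_le_card_filter_eq {ι : Type*} {s : Finset ι} {v : ι → ℕ} {d : ℕ} {ρ : ℝ}
    (hv : ∀ i ∈ s, d ≤ v i) (h : ∑ i ∈ s, (2 : ℝ) ^ v i ≤ #s * (2 ^ d * (1 + ρ))) :
    (1 - ρ) * #s ≤ (#{i ∈ s | v i = d} : ℝ) := by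
  have pointwise : ∀ i ∈ s, (2 : ℝ) ^ d * (2 - if v i = d then 1 else 0) ≤ 2 ^ v i := by
    intro i hi
    split_ifs with eq
    · rw [eq]; linarith
    · rw [sub_zero, ← pow_succ]
      exact pow_le_pow_right₀ one_le_two (by have := hv i hi; omega)
  have summed := (sum_le_sum pointwise).trans h
  rw [← mul_sum, sum_sub_distrib, ← natCast_card_filter, sum_const, nsmul_eq_mul,
    mul_left_comm] at summed
  linarith [le_of_mul_le_mul_left summed (by positivity)]

lemma one_sub_mul_card_le_card_finrank_vanishing {ρ : ℝ} (hK : K ≤ binomLe m r)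
    (h : moment m (r + 1) K Set.univ ≤ 2 ^ binomLe m r * (1 + ρ)) :
    (1 - ρ) * #(powersetCard K (univ : Finset (Fin m → ZMod 2)))
      ≤ #((powersetCard K univ).filter fun Z : Finset (Fin m → ZMod 2) =>
          Module.finrank (ZMod 2) (vanishing m r (Z : Set _)) = binomLe m r - K) := by
  refine one_sub_mul_card_le_card_filter_eq (fun Z hZ => ?_) ?_
  · rw [← (mem_powersetCard.mp hZ).2]
    exact binomLe_sub_card_le_finrank_vanishing Z
  · have double_count : ∑ Z ∈ powersetCard K (univ : Finset (Fin m → ZMod 2)),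
        (2 : ℝ) ^ Module.finrank (ZMod 2) (vanishing m r (Z : Set _))
        = ∑ c : RMcode m r, ((numZeros m r c).choose K : ℝ) := by
      exact_mod_cast sum_two_pow_finrank_vanishing m r K
    have split_two_pow : (2 : ℝ) ^ binomLe m r = 2 ^ (binomLe m r - K) * 2 ^ K := by
      rw [← pow_add, Nat.sub_add_cancel hK]
    rw [double_count, card_powersetCard, card_univ, Fintype.card_fun, ZMod.card, Fintype.card_fin]
    refine le_of_mul_le_mul_right ?_ (by positivity : (0 : ℝ) < 2 ^ K)
    calc _ ≤ ((2 ^ m).choose K : ℝ) * moment m (r + 1) K Set.univ :=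
          sum_choose_numZeros_mul_two_pow_le m r K
      _ ≤ (2 ^ m).choose K * (2 ^ binomLe m r * (1 + ρ)) := by gcongr
      _ = _ := by rw [split_two_pow]; ring

lemma natCard_card_eq_and {α : Type*} [Fintype α] (K : ℕ) (p : Finset α → Prop)
    [DecidablePred p] :
    Nat.card {Z : Finset α // #Z = K ∧ p Z} = #{Z ∈ powersetCard K univ | p Z} := by
  classical
  rw [Nat.card_eq_fintype_card, Fintype.card_subtype]
  congr 1
  ext Z
  simp [mem_powersetCard]

end VanishingSpace

end ReedMuller

open ReedMuller in
theorem vanishing_space_random_set_general {ε ρ : ℝ} (hε : 0 < ε) (hρ : 0 < ρ) :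
    ∃ m₀ : ℕ, ∀ m ≥ m₀, ∀ r ≥ 1, 32768 * r ≤ m → ∀ K : ℕ, (K : ℝ) ≤ (1 - ε) * binomLe m r →
      (1 - ρ) * (Nat.card {Z : Finset (Fin m → ZMod 2) // Z.card = K} : ℝ)
        ≤ Nat.card {Z : Finset (Fin m → ZMod 2) // Z.card = K ∧
            Module.finrank (ZMod 2) (vanishing m r (Z : Set (Fin m → ZMod 2)))
              = binomLe m r - K} := by
  obtain ⟨a, n, N₀, hn, momentBound_le⟩ := exists_forall_ge_momentBound_le hε hρ
  refine ⟨max N₀ (40 * a + 200), fun m hm r hr hrm K hK => ?_⟩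
  have N₀_le : N₀ ≤ binomLe m r := ((le_max_left _ _).trans hm).trans (le_binomLt hr)
  have K_le : K ≤ binomLe m r := by
    exact_mod_cast hK.trans (mul_le_of_le_one_left (Nat.cast_nonneg _) (by linarith))
  have moment_le : moment m (r + 1) K Set.univ ≤ 2 ^ binomLe m r * (1 + ρ) :=
    (moment_univ_le hrm ((le_max_right _ _).trans hm) hε.le hn hK).trans
      (mul_le_mul_of_nonneg_left (momentBound_le _ N₀_le) (by positivity))
  have card_eq : Nat.card {Z : Finset (Fin m → ZMod 2) // Z.card = K}
      = (Finset.powersetCard K (Finset.univ : Finset (Fin m → ZMod 2))).card := by simp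
  rw [card_eq, natCard_card_eq_and]
  exact one_sub_mul_card_le_card_finrank_vanishing K_le moment_le

/-- dimension of degree-`r` vanishing space of a random set.
There is an absolute constant `γ₀ > 0` such that for every `ε ∈ (0,1)` and `ρ > 0`
there is `m₀` such that for all `m ≥ m₀` and `1 ≤ r < γ₀ m`, setting
`K = ⌊(1-ε)·binom(m,≤r)⌋`, a uniformly random `K`-element subset `Z ⊆ F₂^m`
satisfies `dim I_r(Z) = binom(m,≤r) - K` with probability at least `1 - ρ`.
(The probability is expressed by counting `K`-element subsets.) -/
theorem vanishing_space_random_set :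
    ∃ γ₀ : ℝ, 0 < γ₀ ∧
      ∀ ε : ℝ, 0 < ε → ε < 1 →
        ∀ ρ : ℝ, 0 < ρ →
          ∃ m₀ : ℕ, ∀ m : ℕ, m₀ ≤ m →
            ∀ r : ℕ, 1 ≤ r → (r : ℝ) < γ₀ * m →
              ∀ K : ℕ, K = ⌊(1 - ε) * (binomLe m r : ℝ)⌋₊ →
                (1 - ρ) *
                    (Nat.card {Z : Finset (Fin m → ZMod 2) // Z.card = K} : ℝ)
                  ≤ (Nat.card {Z : Finset (Fin m → ZMod 2) //
                      Z.card = K ∧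
                      Module.finrank (ZMod 2)
                        ↥(vanishing m r (Z : Set (Fin m → ZMod 2))) =
                          binomLe m r - K} : ℝ) := by
  refine ⟨1 / 32768, by norm_num, fun ε hε hε1 ρ hρ => ?_⟩
  obtain ⟨m₀, hm₀⟩ := vanishing_space_random_set_general hε hρ
  refine ⟨m₀, fun m hm r hr hrm K hK => hm₀ m hm r hr ?_ K ?_⟩
  · exact_mod_cast (by linarith : (32768 : ℝ) * r ≤ m)
  · rw [hK]
    exact Nat.floor_le (mul_nonneg (by linarith) (Nat.cast_nonneg _))
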